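/- Let N ∈ {3,4,5} and let v : ℝ^N → ℝ be continuously differentiable with ∇v ∈ L²(ℝ^N) and v ∈ L^{2N/(N−2)}(ℝ^N). If ∫_{ℝ^N}|∇v|² dx ≤ ∫_{ℝ^N}|∇W|² dx and E(v,0) ≤ E(W,0), then ∫_{ℝ^N}|∇v|² dx ≤ N·E(v,0). -/

import Mathlib

open MeasureTheory Metric Filter Set

noncomputable section

/-- The ground state `W(x) = (1 + |x|²/(N(N-2)))^(-(N-2)/2)`. -/
def W (N : ℕ) (x : EuclideanSpace ℝ (Fin N)) : ℝ :=
  (1 + ‖x‖ ^ 2 / ((N : ℝ) * ((N : ℝ) - 2))) ^ (-(((N : ℝ) - 2) / 2))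

/-- The energy `E(v₀,v₁)`. -/
def energy (N : ℕ) (v₀ v₁ : EuclideanSpace ℝ (Fin N) → ℝ) : ℝ :=
  (1 / 2) * (∫ x, v₁ x ^ 2)
    + (1 / 2) * (∫ x, ‖gradient v₀ x‖ ^ 2)
    - ((N : ℝ) - 2) / (2 * (N : ℝ)) * (∫ x, |v₀ x| ^ (2 * (N : ℝ) / ((N : ℝ) - 2)))

/-- The first coordinate of a point of `ℝ^N`. -/
def firstCoord {N : ℕ} (x : EuclideanSpace ℝ (Fin N)) : ℝ :=
  if h : 0 < N then x ⟨0, h⟩ else 0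

/-- The Lorentz-transformed ground state `W_ℓ(t,x)`; the sum `x₂² + ⋯ + x_N²` is written
as `‖x‖² - x₁²`. -/
def Wl (N : ℕ) (ℓ : ℝ) (t : ℝ) (x : EuclideanSpace ℝ (Fin N)) : ℝ :=
  (1 + (firstCoord x - t * ℓ) ^ 2 / ((N : ℝ) * ((N : ℝ) - 2) * (1 - ℓ ^ 2))
     + (‖x‖ ^ 2 - firstCoord x ^ 2) / ((N : ℝ) * ((N : ℝ) - 2))) ^ (-(((N : ℝ) - 2) / 2))

/-- The time derivative `∂ₜ W_ℓ(t,x)`. -/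
def dtWl (N : ℕ) (ℓ : ℝ) (t : ℝ) (x : EuclideanSpace ℝ (Fin N)) : ℝ :=
  deriv (fun s => Wl N ℓ s x) t

/-- The second partial derivative `∂²f/∂xⱼ²` at `x`. -/
def d2 {N : ℕ} (f : EuclideanSpace ℝ (Fin N) → ℝ) (j : Fin N)
    (x : EuclideanSpace ℝ (Fin N)) : ℝ :=
  fderiv ℝ (fun y => fderiv ℝ f y (EuclideanSpace.single j 1)) x (EuclideanSpace.single j 1)

/-!
The sharp Sobolev inequality comes from mass transport. Rescale `W ^ 2*` to the mass of `|v| ^ 2*`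
and transport the latter to it by the triangular (Knothe) map `T`. As the product of the diagonal
entries `∂ᵢTᵢ` is the Jacobian, AM–GM and an integration by parts bound `N ∫ G ^ (1 - 1/N)`, where
`G` is the rescaled density, by `-(2*/2 + 1) ∫ |v| ^ (2*/2) ∇|v| · T`, and Cauchy–Schwarz bounds
this by the `L²` norm of `∇v` times a second moment of `G`. Radial integration by parts evaluates
the two integrals of `G` in terms of `B = ∫ W ^ 2* = ∫ |∇W|²`, which gives
`‖v‖_{2*} ≤ B ^ (-1/N) ‖∇v‖₂` for compactly supported `v`, and then for all `v` by cutoff.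

With `A = ∫ |∇v|²` and `M = ∫ |v| ^ 2*`, the hypothesis `A ≤ B` turns this into `M ≤ A`, while
`N E(v, 0) = A + (N - 2) / 2 * (A - M)`.
-/

/-! ### Monotone rearrangement on the line -/

section IncreasingTransport

theorem continuous_uncurry_of_rightInverse_of_strictMono {P α β : Type*} [TopologicalSpace P]
    [LinearOrder α] [TopologicalSpace α] [OrderTopology α]
    [LinearOrder β] [TopologicalSpace β] [OrderClosedTopology β] {Φ : P → α → β} {e : P → β → α}
    (hΦ : ∀ y, Continuous fun p ↦ Φ p y) (hmono : ∀ p, StrictMono (Φ p))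
    (he : ∀ p, Function.RightInverse (e p) (Φ p)) : Continuous ↿e := by
  refine continuous_iff_continuousAt.2 fun ⟨p₀, t₀⟩ ↦ tendsto_order.2 ⟨fun y hy ↦ ?_, fun y hy ↦ ?_⟩
  · have hlt : Φ p₀ y < t₀ := he p₀ t₀ ▸ hmono p₀ hy
    filter_upwards [((hΦ y).comp continuous_fst).continuousAt.eventually_lt
      continuous_snd.continuousAt hlt] with ⟨p, t⟩ hpt
    exact (hmono p).lt_iff_lt.1 (hpt.trans_eq (he p t).symm)
  · have hlt : t₀ < Φ p₀ y := he p₀ t₀ ▸ hmono p₀ hy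
    filter_upwards [continuous_snd.continuousAt.eventually_lt
      ((hΦ y).comp continuous_fst).continuousAt hlt] with ⟨p, t⟩ hpt
    exact (hmono p).lt_iff_lt.1 ((he p t).trans_lt hpt)

theorem surjective_of_hasDerivAt_ge {f f' : ℝ → ℝ} {m : ℝ} (hm : 0 < m)
    (hf : ∀ x, HasDerivAt f (f' x) x) (hf' : ∀ x, m ≤ f' x) : Function.Surjective f := by
  have growth : ∀ ⦃x y⦄, x ≤ y → m * (y - x) ≤ f y - f x :=
    mul_sub_le_image_sub_of_le_deriv (fun x ↦ (hf x).differentiableAt)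
      fun x ↦ (hf x).deriv.symm ▸ hf' x
  refine Continuous.surjective (continuous_iff_continuousAt.2 fun x ↦ (hf x).continuousAt) ?_ ?_
  · refine tendsto_atTop_mono' _ ?_
      (tendsto_atTop_add_const_right _ (f 0) (tendsto_id.const_mul_atTop hm))
    filter_upwards [eventually_ge_atTop 0] with x hx
    simpa only [id, sub_zero, le_sub_iff_add_le] using growth hx
  · refine tendsto_atBot_mono' _ ?_
      (tendsto_atBot_add_const_right _ (f 0) (tendsto_id.const_mul_atBot hm))
    filter_upwards [eventually_le_atBot 0] with x hx
    have := growth hx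
    simp only [id]
    linarith

/-- `T` is the monotone rearrangement on the line carrying the density `f` on `[a, b]` to the
density `g` on `[c, d]`. -/
structure IsIncreasingTransport (a b c d : ℝ) (f g T : ℝ → ℝ) : Prop where
  map_left : T a = c
  map_right : T b = d
  mapsTo : MapsTo T (Icc a b) (Icc c d)
  hasDerivAt : ∀ s ∈ Icc a b, HasDerivAt T (f s / g (T s)) s

theorem IsIncreasingTransport.integral_comp {a b c d : ℝ} {f g T φ : ℝ → ℝ}
    (hT : IsIncreasingTransport a b c d f g T) (hab : a ≤ b)
    (hD : Continuous fun s ↦ f s / g (T s)) (hφ : Continuous φ) :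
    ∫ s in a..b, f s / g (T s) * φ (T s) = ∫ t in c..d, φ t := by
  have hderiv : ∀ s ∈ uIcc a b, HasDerivAt T (f s / g (T s)) s := by
    simpa only [uIcc_of_le hab] using hT.hasDerivAt
  have := intervalIntegral.integral_comp_mul_deriv hderiv hD.continuousOn hφ
  simpa only [Function.comp_apply, mul_comm, hT.map_left, hT.map_right] using this

theorem strictMono_integral_of_pos {f : ℝ → ℝ} (hf : Continuous f) (hpos : ∀ x, 0 < f x) (a : ℝ) :
    StrictMono fun x ↦ ∫ s in a..x, f s :=
  strictMono_of_hasDerivAt_pos (fun x ↦ hf.integral_hasStrictDerivAt a x |>.hasDerivAt) hpos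

variable {P : Type*} [TopologicalSpace P] {a b c d : ℝ}

-- Extending `g` constantly beyond `[c, d]` makes its primitive a bijection of the whole line, so
-- that the transport is globally defined and continuous.
theorem surjective_integral_comp_projIcc {g : ℝ → ℝ} (hcd : c < d) (hg : Continuous g)
    (hpos : ∀ t, 0 < g t) :
    Function.Surjective fun x ↦ ∫ t in c..x, g (projIcc c d hcd.le t) := by
  obtain ⟨t₀, -, hmin⟩ := isCompact_Icc.exists_isMinOn (nonempty_Icc.2 hcd.le) hg.continuousOn
  have hcont : Continuous fun t ↦ g (projIcc c d hcd.le t) :=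
    hg.comp (continuous_subtype_val.comp continuous_projIcc)
  exact surjective_of_hasDerivAt_ge (hpos t₀)
    (fun x ↦ (hcont.integral_hasStrictDerivAt c x).hasDerivAt) fun t ↦ hmin (projIcc c d hcd.le t).2

theorem isIncreasingTransport_comp_integral {f g e : ℝ → ℝ} (hcd : c < d)
    (hf : Continuous f) (hg : Continuous g) (hf₀ : ∀ s, 0 < f s) (hg₀ : ∀ t, 0 < g t)
    (hmass : ∫ s in a..b, f s = ∫ t in c..d, g t) (hec : Continuous e)
    (he : Function.RightInverse e fun x ↦ ∫ t in c..x, g (projIcc c d hcd.le t)) :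
    IsIncreasingTransport a b c d f g fun s ↦ e (∫ r in a..s, f r) := by
  have hg' : Continuous fun t ↦ g (projIcc c d hcd.le t) :=
    hg.comp (continuous_subtype_val.comp continuous_projIcc)
  have hΦ := strictMono_integral_of_pos hg' (fun _ ↦ hg₀ _) c
  have proj_eq : ∀ t ∈ Icc c d, g (projIcc c d hcd.le t) = g t := fun t ht ↦ by
    rw [projIcc_of_mem hcd.le ht]
  have left : e (∫ r in a..a, f r) = c := hΦ.injective <| by
    simp only [he _, intervalIntegral.integral_same]
  have right : e (∫ r in a..b, f r) = d := hΦ.injective <| by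
    simp only [he _, hmass]
    exact intervalIntegral.integral_congr fun t ht ↦ (proj_eq t (uIcc_of_le hcd.le ▸ ht)).symm
  have mono : Monotone fun s ↦ e (∫ r in a..s, f r) := fun s t hst ↦ hΦ.le_iff_le.1 <| by
    simpa only [he _] using (strictMono_integral_of_pos hf hf₀ a).monotone hst
  have maps : MapsTo (fun s ↦ e (∫ r in a..s, f r)) (Icc a b) (Icc c d) := fun s hs ↦
    ⟨left.symm.trans_le (mono hs.1), (mono hs.2).trans_eq right⟩
  refine ⟨left, right, maps, fun s hs ↦ ?_⟩
  have inverse := HasDerivAt.of_local_left_inverse hec.continuousAt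
    (hg'.integral_hasStrictDerivAt c (e (∫ r in a..s, f r))).hasDerivAt (hg₀ _).ne'
    (Eventually.of_forall he)
  have := inverse.comp s (hf.integral_hasStrictDerivAt a s).hasDerivAt
  rwa [proj_eq _ (maps hs), ← div_eq_inv_mul] at this

theorem exists_isIncreasingTransport {f g : P → ℝ → ℝ}
    (hcd : c < d) (hf : Continuous ↿f) (hg : Continuous ↿g)
    (hf₀ : ∀ p s, 0 < f p s) (hg₀ : ∀ p t, 0 < g p t)
    (hmass : ∀ p, ∫ s in a..b, f p s = ∫ t in c..d, g p t) :
    ∃ T : P → ℝ → ℝ, Continuous ↿T ∧ ∀ p, IsIncreasingTransport a b c d (f p) (g p) (T p) := by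
  have hf' (p) : Continuous (f p) := hf.comp (by fun_prop : Continuous fun s ↦ (p, s))
  have hg' (p) : Continuous (g p) := hg.comp (by fun_prop : Continuous fun t ↦ (p, t))
  have hproj : Continuous fun t ↦ (projIcc c d hcd.le t : ℝ) :=
    continuous_subtype_val.comp continuous_projIcc
  have hgproj : Continuous fun q : P × ℝ ↦ g q.1 (projIcc c d hcd.le q.2) :=
    hg.comp (continuous_fst.prodMk (hproj.comp continuous_snd))
  choose e he using fun p ↦ surjective_integral_comp_projIcc hcd (hg' p) (hg₀ p)
  have hec : Continuous ↿e := continuous_uncurry_of_rightInverse_of_strictMono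
    (Φ := fun p x ↦ ∫ t in c..x, g p (projIcc c d hcd.le t))
    (fun x ↦ intervalIntegral.continuous_parametric_intervalIntegral_of_continuous' hgproj c x)
    (fun p ↦ strictMono_integral_of_pos ((hg' p).comp hproj) (fun _ ↦ hg₀ p _) c) he
  have hΨ : Continuous fun q : P × ℝ ↦ ∫ r in a..q.2, f q.1 r :=
    intervalIntegral.continuous_parametric_intervalIntegral_of_continuous
      (f := fun q : P × ℝ ↦ f q.1)
      (hf.comp (by fun_prop : Continuous fun q : (P × ℝ) × ℝ ↦ (q.1.1, q.2))) continuous_snd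
  exact ⟨fun p s ↦ e p (∫ r in a..s, f p r), by exact hec.comp (continuous_fst.prodMk hΨ),
    fun p ↦ isIncreasingTransport_comp_integral hcd (hf' p) (hg' p) (hf₀ p) (hg₀ p) (hmass p)
      (hec.comp (by fun_prop : Continuous fun t ↦ (p, t))) (he p)⟩

end IncreasingTransport

/-! ### Integration over boxes -/

section Boxes

variable {n : ℕ}

theorem continuous_insertNth_uncurry (i : Fin (n + 1)) :
    Continuous fun q : ℝ × (Fin n → ℝ) ↦ (i.insertNth q.1 q.2 : Fin (n + 1) → ℝ) :=
  Continuous.finInsertNth (A := fun _ ↦ ℝ) i continuous_fst continuous_snd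

theorem integrableOn_Icc_prod_insertNth {φ : (Fin (n + 1) → ℝ) → ℝ} (hφ : Continuous φ)
    (i : Fin (n + 1)) (a b : Fin (n + 1) → ℝ) :
    IntegrableOn (fun q : ℝ × (Fin n → ℝ) ↦ φ (i.insertNth q.1 q.2))
      (Icc (a i) (b i) ×ˢ Icc (i.removeNth a) (i.removeNth b)) :=
  (hφ.comp (continuous_insertNth_uncurry i)).continuousOn.integrableOn_compact
    (isCompact_Icc.prod isCompact_Icc)

theorem setIntegral_Icc_insertNth {φ : (Fin (n + 1) → ℝ) → ℝ} (hφ : Continuous φ)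
    (i : Fin (n + 1)) {a b : Fin (n + 1) → ℝ} (hab : a i ≤ b i) :
    ∫ x in Icc a b, φ x
      = ∫ s in a i..b i, ∫ y in Icc (i.removeNth a) (i.removeNth b), φ (i.insertNth s y) := by
  have hem := (volume_preserving_piFinSuccAbove (fun _ : Fin (n + 1) ↦ ℝ) i).symm
  have hpre : (MeasurableEquiv.piFinSuccAbove (fun _ ↦ ℝ) i).symm ⁻¹' Icc a b
      = Icc (a i) (b i) ×ˢ Icc (i.removeNth a) (i.removeNth b) :=
    ((Fin.insertNthOrderIso (fun _ ↦ ℝ) i).preimage_Icc a b).trans (Icc_prod_eq _ _)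
  rw [← hem.map_eq, setIntegral_map_equiv, hpre, Measure.volume_eq_prod,
    intervalIntegral.integral_of_le hab, ← integral_Icc_eq_integral_Ioc]
  exact setIntegral_prod _ (integrableOn_Icc_prod_insertNth hφ i a b)

theorem setIntegral_Icc_insertNth_swap {φ : (Fin (n + 1) → ℝ) → ℝ} (hφ : Continuous φ)
    (i : Fin (n + 1)) {a b : Fin (n + 1) → ℝ} (hab : a i ≤ b i) :
    ∫ x in Icc a b, φ x
      = ∫ y in Icc (i.removeNth a) (i.removeNth b), ∫ s in a i..b i, φ (i.insertNth s y) := by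
  rw [setIntegral_Icc_insertNth hφ i hab]
  simp only [intervalIntegral.integral_of_le hab, ← integral_Icc_eq_integral_Ioc]
  refine integral_integral_swap ?_
  rw [Measure.prod_restrict]
  exact integrableOn_Icc_prod_insertNth hφ i a b

theorem setIntegral_Icc_cons {φ : (Fin (n + 1) → ℝ) → ℝ} (hφ : Continuous φ)
    {a b : Fin (n + 1) → ℝ} (hab : a 0 ≤ b 0) :
    ∫ x in Icc a b, φ x
      = ∫ s in a 0..b 0, ∫ y in Icc (Fin.tail a) (Fin.tail b), φ (Fin.cons s y) := by
  simpa only [Fin.insertNth_zero', Fin.removeNth_zero] using setIntegral_Icc_insertNth hφ 0 hab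

theorem cons_mem_Icc_iff {a b : Fin (n + 1) → ℝ} {s : ℝ} {y : Fin n → ℝ} :
    (Fin.cons s y : Fin (n + 1) → ℝ) ∈ Icc a b
      ↔ s ∈ Icc (a 0) (b 0) ∧ y ∈ Icc (Fin.tail a) (Fin.tail b) := by
  rw [← Fin.insertNth_zero' s y]
  exact Fin.insertNth_mem_Icc

theorem setIntegral_Icc_pos {ι : Type*} [Fintype ι] {a b : ι → ℝ} (hab : ∀ i, a i < b i)
    {φ : (ι → ℝ) → ℝ} (hφ : Continuous φ) (hpos : ∀ x, 0 < φ x) : 0 < ∫ x in Icc a b, φ x := by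
  refine (setIntegral_pos_iff_support_of_nonneg_ae (Eventually.of_forall fun x ↦ (hpos x).le)
    (hφ.continuousOn.integrableOn_compact isCompact_Icc)).2 ?_
  rw [eq_univ_of_forall (s := Function.support φ) fun x ↦ (hpos x).ne', univ_inter,
    Real.volume_Icc_pi]
  exact CanonicallyOrderedAdd.prod_pos.2 fun i _ ↦ ENNReal.ofReal_pos.2 (sub_pos.2 (hab i))

theorem setIntegral_Icc_partialDeriv_le {φ φ' : (Fin (n + 1) → ℝ) → ℝ} {a b : Fin (n + 1) → ℝ}
    {M : ℝ} (i : Fin (n + 1)) (hab : a i ≤ b i) (hφ' : Continuous φ')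
    (hderiv : ∀ x ∈ Icc a b, HasDerivAt (fun s ↦ φ (Function.update x i s)) (φ' x) (x i))
    (hM : ∀ x ∈ Icc a b, x i = a i ∨ x i = b i → |φ x| ≤ M) :
    ∫ x in Icc a b, φ' x ≤ 2 * M * volume.real (Icc (i.removeNth a) (i.removeNth b)) := by
  have hcont : Continuous fun q : (Fin n → ℝ) × ℝ ↦ φ' (i.insertNth q.2 q.1) :=
    hφ'.comp ((continuous_insertNth_uncurry i).comp continuous_swap)
  have inner : ∀ y ∈ Icc (i.removeNth a) (i.removeNth b),
      ∫ s in a i..b i, φ' (i.insertNth s y) ≤ 2 * M := by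
    intro y hy
    have mem : ∀ s ∈ Icc (a i) (b i), (i.insertNth s y : Fin (n + 1) → ℝ) ∈ Icc a b :=
      fun s hs ↦ Fin.insertNth_mem_Icc.2 ⟨hs, hy⟩
    have hd : ∀ s ∈ uIcc (a i) (b i),
        HasDerivAt (fun s ↦ φ (i.insertNth s y)) (φ' (i.insertNth s y)) s := fun s hs ↦ by
      simpa using hderiv _ (mem s (uIcc_of_le hab ▸ hs))
    rw [intervalIntegral.integral_eq_sub_of_hasDerivAt hd ((hcont.comp
      (by fun_prop : Continuous fun s ↦ (y, s))).intervalIntegrable _ _)]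
    have left := hM _ (mem _ (left_mem_Icc.2 hab)) (Or.inl (by simp))
    have right := hM _ (mem _ (right_mem_Icc.2 hab)) (Or.inr (by simp))
    linarith [abs_le.1 left, abs_le.1 right]
  calc ∫ x in Icc a b, φ' x
      = ∫ y in Icc (i.removeNth a) (i.removeNth b), ∫ s in a i..b i, φ' (i.insertNth s y) :=
        setIntegral_Icc_insertNth_swap hφ' i hab
    _ ≤ ∫ y in Icc (i.removeNth a) (i.removeNth b), 2 * M :=
        setIntegral_mono_on ((intervalIntegral.continuous_parametric_intervalIntegral_of_continuous'
          hcont _ _).continuousOn.integrableOn_compact isCompact_Icc)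
          (continuousOn_const.integrableOn_compact isCompact_Icc) measurableSet_Icc inner
    _ = 2 * M * volume.real (Icc (i.removeNth a) (i.removeNth b)) := by
        rw [setIntegral_const, smul_eq_mul, mul_comm]

end Boxes

/-! ### Knothe transport -/

section Knothe

/-- `T` is a triangular (Knothe) transport of the density `F` on the box `Icc a b` to the density
`G` on the box `Icc c d`, and `D x i` is the `i`-th diagonal entry `∂ᵢTᵢ(x)` of its derivative.
Off-diagonal derivatives need not exist. -/
structure IsKnotheTransport {n : ℕ} (a b c d : Fin n → ℝ) (F G : (Fin n → ℝ) → ℝ)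
    (T D : (Fin n → ℝ) → Fin n → ℝ) : Prop where
  mapsTo : MapsTo T (Icc a b) (Icc c d)
  diag_pos : ∀ x ∈ Icc a b, ∀ i, 0 < D x i
  hasDerivAt : ∀ x ∈ Icc a b, ∀ i,
    HasDerivAt (fun s ↦ T (Function.update x i s) i) (D x i) (x i)
  prod_diag_mul : ∀ x ∈ Icc a b, (∏ i, D x i) * G (T x) = F x
  integral_comp : ∀ φ : (Fin n → ℝ) → ℝ, Continuous φ →
    ∫ x in Icc a b, F x * φ (T x) = ∫ y in Icc c d, G y * φ y

variable {n : ℕ}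

theorem setIntegral_Icc_fin_zero (a b x : Fin 0 → ℝ) (φ : (Fin 0 → ℝ) → ℝ) :
    ∫ y in Icc a b, φ y = φ x := by
  rw [eq_univ_of_forall (s := Icc a b) fun y ↦ ⟨(Subsingleton.elim _ _).le,
    (Subsingleton.elim _ _).le⟩, Measure.restrict_univ, volume_pi, Measure.pi_of_empty _ x,
    integral_dirac]

theorem isKnotheTransport_fin_zero {a b c d : Fin 0 → ℝ} {F G : (Fin 0 → ℝ) → ℝ}
    (hmass : ∫ x in Icc a b, F x = ∫ y in Icc c d, G y) (D : (Fin 0 → ℝ) → Fin 0 → ℝ) :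
    IsKnotheTransport a b c d F G id D where
  mapsTo _ _ := ⟨(Subsingleton.elim _ _).le, (Subsingleton.elim _ _).le⟩
  diag_pos _ _ i := i.elim0
  hasDerivAt _ _ i := i.elim0
  prod_diag_mul x _ := by simpa [setIntegral_Icc_fin_zero _ _ x] using hmass.symm
  integral_comp φ _ := by
    simp only [setIntegral_Icc_fin_zero _ _ 0] at hmass ⊢
    rw [hmass, id]

section Cons

variable {a b c d : Fin (n + 1) → ℝ} {F G : (Fin (n + 1) → ℝ) → ℝ} {f g T₀ : ℝ → ℝ}
  {T₁ D₁ : ℝ → (Fin n → ℝ) → Fin n → ℝ}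

theorem setIntegral_Icc_mul_comp_cons (hab : a 0 ≤ b 0) (hcd : c 0 ≤ d 0) (hF : Continuous F)
    (hG : Continuous G) (hT₀ : IsIncreasingTransport (a 0) (b 0) (c 0) (d 0) f g T₀)
    (hD₀ : Continuous fun s ↦ f s / g (T₀ s))
    (hT : Continuous fun x : Fin (n + 1) → ℝ ↦
      (Fin.cons (T₀ (x 0)) (T₁ (x 0) (Fin.tail x)) : Fin (n + 1) → ℝ))
    (hT₁ : ∀ s, IsKnotheTransport (Fin.tail a) (Fin.tail b) (Fin.tail c) (Fin.tail d)
      (fun y ↦ F (Fin.cons s y)) (fun z ↦ f s / g (T₀ s) * G (Fin.cons (T₀ s) z)) (T₁ s) (D₁ s))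
    {φ : (Fin (n + 1) → ℝ) → ℝ} (hφ : Continuous φ) :
    ∫ x in Icc a b, F x * φ (Fin.cons (T₀ (x 0)) (T₁ (x 0) (Fin.tail x)))
      = ∫ y in Icc c d, G y * φ y := by
  have hψ : Continuous fun t ↦ ∫ z in Icc (Fin.tail c) (Fin.tail d),
      G (Fin.cons t z) * φ (Fin.cons t z) :=
    continuous_parametric_integral_of_continuous (by fun_prop) isCompact_Icc
  calc ∫ x in Icc a b, F x * φ (Fin.cons (T₀ (x 0)) (T₁ (x 0) (Fin.tail x)))
      = ∫ s in a 0..b 0, ∫ y in Icc (Fin.tail a) (Fin.tail b),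
          F (Fin.cons s y) * φ (Fin.cons (T₀ s) (T₁ s y)) := by
        simpa only [Pi.mul_apply, Function.comp_apply, Fin.cons_zero, Fin.tail_cons] using
          setIntegral_Icc_cons (hF.mul (hφ.comp hT)) hab
    _ = ∫ s in a 0..b 0, f s / g (T₀ s) * ∫ z in Icc (Fin.tail c) (Fin.tail d),
          G (Fin.cons (T₀ s) z) * φ (Fin.cons (T₀ s) z) := by
        refine intervalIntegral.integral_congr fun s _ ↦ ?_
        have := (hT₁ s).integral_comp (fun z ↦ φ (Fin.cons (T₀ s) z)) (by fun_prop)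
        simpa only [mul_assoc, integral_const_mul] using this
    _ = ∫ t in c 0..d 0, ∫ z in Icc (Fin.tail c) (Fin.tail d),
          G (Fin.cons t z) * φ (Fin.cons t z) := hT₀.integral_comp hab hD₀ hψ
    _ = ∫ y in Icc c d, G y * φ y := (setIntegral_Icc_cons (hG.mul hφ) hcd).symm

theorem IsKnotheTransport.cons (hab : a 0 ≤ b 0) (hcd : c 0 ≤ d 0) (hF : Continuous F)
    (hG : Continuous G) (hT₀ : IsIncreasingTransport (a 0) (b 0) (c 0) (d 0) f g T₀)
    (hD₀ : Continuous fun s ↦ f s / g (T₀ s)) (hD₀_pos : ∀ s, 0 < f s / g (T₀ s))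
    (hT : Continuous fun x : Fin (n + 1) → ℝ ↦
      (Fin.cons (T₀ (x 0)) (T₁ (x 0) (Fin.tail x)) : Fin (n + 1) → ℝ))
    (hT₁ : ∀ s, IsKnotheTransport (Fin.tail a) (Fin.tail b) (Fin.tail c) (Fin.tail d)
      (fun y ↦ F (Fin.cons s y)) (fun z ↦ f s / g (T₀ s) * G (Fin.cons (T₀ s) z)) (T₁ s) (D₁ s)) :
    IsKnotheTransport a b c d F G (fun x ↦ Fin.cons (T₀ (x 0)) (T₁ (x 0) (Fin.tail x)))
      (fun x ↦ Fin.cons (f (x 0) / g (T₀ (x 0))) (D₁ (x 0) (Fin.tail x))) := by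
  have mem {x} (hx : x ∈ Icc a b) :
      x 0 ∈ Icc (a 0) (b 0) ∧ Fin.tail x ∈ Icc (Fin.tail a) (Fin.tail b) := by
    rwa [← Fin.cons_self_tail x, cons_mem_Icc_iff] at hx
  refine ⟨fun x hx ↦ ?_, fun x hx i ↦ ?_, fun x hx i ↦ ?_, fun x hx ↦ ?_, fun φ hφ ↦
    setIntegral_Icc_mul_comp_cons hab hcd hF hG hT₀ hD₀ hT hT₁ hφ⟩
  · exact cons_mem_Icc_iff.2 ⟨hT₀.mapsTo (mem hx).1, (hT₁ _).mapsTo (mem hx).2⟩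
  · cases i using Fin.cases with
    | zero => exact hD₀_pos _
    | succ j => exact (hT₁ _).diag_pos _ (mem hx).2 j
  · cases i using Fin.cases with
    | zero => simpa using hT₀.hasDerivAt _ (mem hx).1
    | succ j =>
      simp only [Fin.cons_succ, Fin.tail_update_succ,
        Function.update_of_ne (Fin.succ_ne_zero j).symm]
      exact (hT₁ (x 0)).hasDerivAt _ (mem hx).2 j
  · have := (hT₁ (x 0)).prod_diag_mul _ (mem hx).2
    rw [Fin.cons_self_tail] at this
    rw [Fin.prod_univ_succ, ← this]
    simp only [Fin.cons_zero, Fin.cons_succ]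
    ring

end Cons

/-- The density of the first coordinate when `F` is restricted to a box whose remaining sides are
given by `Icc a b`. -/
def firstMarginal (a b : Fin n → ℝ) (F : (Fin (n + 1) → ℝ) → ℝ) (s : ℝ) : ℝ :=
  ∫ y in Icc a b, F (Fin.cons s y)

theorem firstMarginal_pos {a b : Fin n → ℝ} (hab : ∀ i, a i < b i) {F : (Fin (n + 1) → ℝ) → ℝ}
    (hF : Continuous F) (hF₀ : ∀ x, 0 < F x) (s : ℝ) : 0 < firstMarginal a b F s :=
  setIntegral_Icc_pos hab (φ := fun y ↦ F (Fin.cons s y)) (by fun_prop) fun _ ↦ hF₀ _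

variable {P : Type*} [TopologicalSpace P]

theorem continuous_comp_cons {F : P → (Fin (n + 1) → ℝ) → ℝ} (hF : Continuous ↿F)
    {τ : P → ℝ → ℝ} (hτ : Continuous ↿τ) :
    Continuous fun q : (P × ℝ) × (Fin n → ℝ) ↦ F q.1.1 (Fin.cons (τ q.1.1 q.1.2) q.2) :=
  have hτ' : Continuous fun q : P × ℝ ↦ τ q.1 q.2 := hτ
  hF.comp (by fun_prop : Continuous fun q : (P × ℝ) × (Fin n → ℝ) ↦
    (q.1.1, (Fin.cons (τ q.1.1 q.1.2) q.2 : Fin (n + 1) → ℝ)))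

variable [FirstCountableTopology P] [LocallyCompactSpace P]

theorem continuous_firstMarginal (a b : Fin n → ℝ) {F : P → (Fin (n + 1) → ℝ) → ℝ}
    (hF : Continuous ↿F) : Continuous ↿fun p ↦ firstMarginal a b (F p) :=
  continuous_parametric_integral_of_continuous (X := P × ℝ)
    (f := fun q y ↦ F q.1 (Fin.cons q.2 y))
    (continuous_comp_cons hF (τ := fun _ s ↦ s) (by exact continuous_snd)) isCompact_Icc

theorem exists_isIncreasingTransport_firstMarginal {a b c d : Fin (n + 1) → ℝ}
    (hab : ∀ i, a i < b i) (hcd : ∀ i, c i < d i) {F G : P → (Fin (n + 1) → ℝ) → ℝ}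
    (hF : Continuous ↿F) (hG : Continuous ↿G) (hF₀ : ∀ p x, 0 < F p x) (hG₀ : ∀ p y, 0 < G p y)
    (hmass : ∀ p, ∫ x in Icc a b, F p x = ∫ y in Icc c d, G p y) :
    ∃ T : P → ℝ → ℝ, Continuous ↿T ∧ ∀ p, IsIncreasingTransport (a 0) (b 0) (c 0) (d 0)
      (firstMarginal (Fin.tail a) (Fin.tail b) (F p))
      (firstMarginal (Fin.tail c) (Fin.tail d) (G p)) (T p) := by
  have hFp (p) : Continuous (F p) := hF.comp (by fun_prop : Continuous fun x ↦ (p, x))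
  have hGp (p) : Continuous (G p) := hG.comp (by fun_prop : Continuous fun y ↦ (p, y))
  exact exists_isIncreasingTransport (hcd 0) (continuous_firstMarginal _ _ hF)
    (continuous_firstMarginal _ _ hG)
    (fun p ↦ firstMarginal_pos (fun i ↦ hab i.succ) (hFp p) (hF₀ p))
    (fun p ↦ firstMarginal_pos (fun i ↦ hcd i.succ) (hGp p) (hG₀ p)) fun p ↦
      (setIntegral_Icc_cons (hFp p) (hab 0).le).symm.trans
        ((hmass p).trans (setIntegral_Icc_cons (hGp p) (hcd 0).le))

theorem exists_isKnotheTransport {a b c d : Fin n → ℝ} (hab : ∀ i, a i < b i)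
    (hcd : ∀ i, c i < d i) {F G : P → (Fin n → ℝ) → ℝ} (hF : Continuous ↿F) (hG : Continuous ↿G)
    (hF₀ : ∀ p x, 0 < F p x) (hG₀ : ∀ p y, 0 < G p y)
    (hmass : ∀ p, ∫ x in Icc a b, F p x = ∫ y in Icc c d, G p y) :
    ∃ T D : P → (Fin n → ℝ) → Fin n → ℝ,
      Continuous (Function.uncurry T) ∧ Continuous (Function.uncurry D) ∧
      ∀ p, IsKnotheTransport a b c d (F p) (G p) (T p) (D p) := by
  -- The parameter space drives the induction: the densities of the last `n` coordinates are
  -- parametrized by the first one.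
  induction n generalizing P with
  | zero =>
    exact ⟨fun _ x ↦ x, fun _ x ↦ x, continuous_snd, continuous_snd,
      fun p ↦ isKnotheTransport_fin_zero (hmass p) _⟩
  | succ n ih =>
    have hFp (p) : Continuous (F p) := hF.comp (by fun_prop : Continuous fun x ↦ (p, x))
    have hGp (p) : Continuous (G p) := hG.comp (by fun_prop : Continuous fun y ↦ (p, y))
    obtain ⟨T₀, hT₀c, hT₀⟩ :=
      exists_isIncreasingTransport_firstMarginal hab hcd hF hG hF₀ hG₀ hmass
    let D₀ p s := firstMarginal (Fin.tail a) (Fin.tail b) (F p) s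
      / firstMarginal (Fin.tail c) (Fin.tail d) (G p) (T₀ p s)
    have hg₀ (p t) := firstMarginal_pos (fun i ↦ hcd i.succ) (hGp p) (hG₀ p) t
    have hD₀ (p s) : 0 < D₀ p s :=
      div_pos (firstMarginal_pos (fun i ↦ hab i.succ) (hFp p) (hF₀ p) s) (hg₀ p _)
    have hD₀c : Continuous ↿D₀ := (continuous_firstMarginal _ _ hF).div
      ((continuous_firstMarginal _ _ hG).comp (continuous_fst.prodMk hT₀c)) fun q ↦ (hg₀ _ _).ne'
    obtain ⟨T₁, D₁, hT₁c, hD₁c, hT₁⟩ := ih (P := P × ℝ)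
      (a := Fin.tail a) (b := Fin.tail b) (c := Fin.tail c) (d := Fin.tail d)
      (F := fun q y ↦ F q.1 (Fin.cons q.2 y))
      (G := fun q z ↦ D₀ q.1 q.2 * G q.1 (Fin.cons (T₀ q.1 q.2) z))
      (fun i ↦ hab i.succ) (fun i ↦ hcd i.succ)
      (continuous_comp_cons hF (τ := fun _ s ↦ s) (by exact continuous_snd))
      ((hD₀c.comp continuous_fst).mul (continuous_comp_cons hG hT₀c)) (fun q y ↦ hF₀ _ _)
      (fun q z ↦ mul_pos (hD₀ _ _) (hG₀ _ _))
      fun q ↦ by rw [integral_const_mul]; exact (div_mul_cancel₀ _ (hg₀ _ _).ne').symm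
    have hq₀ : Continuous fun r : P × (Fin (n + 1) → ℝ) ↦ (r.1, r.2 0) := by fun_prop
    have hq : Continuous fun r : P × (Fin (n + 1) → ℝ) ↦ ((r.1, r.2 0), Fin.tail r.2) := by
      fun_prop
    have hT := Continuous.finCons (A := fun _ ↦ ℝ) (hT₀c.comp hq₀) (hT₁c.comp hq)
    exact ⟨fun p x ↦ Fin.cons (T₀ p (x 0)) (T₁ (p, x 0) (Fin.tail x)),
      fun p x ↦ Fin.cons (D₀ p (x 0)) (D₁ (p, x 0) (Fin.tail x)),
      hT, Continuous.finCons (A := fun _ ↦ ℝ) (hD₀c.comp hq₀) (hD₁c.comp hq),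
      fun p ↦ IsKnotheTransport.cons (T₁ := fun s ↦ T₁ (p, s)) (hab 0).le (hcd 0).le
        (hFp p) (hGp p) (hT₀ p) (hD₀c.comp (by fun_prop : Continuous fun s ↦ (p, s))) (hD₀ p)
        (hT.comp (by fun_prop : Continuous fun x ↦ (p, x))) fun s ↦ hT₁ (p, s)⟩

end Knothe

/-! ### The transport inequality on boxes -/

section TransportInequality

/-- The critical exponent `2*` of the Sobolev embedding for `L²` gradients in dimension `n`. -/
def sobolevExponent (n : ℕ) : ℝ := 2 * (n : ℝ) / ((n : ℝ) - 2)

theorem two_lt_sobolevExponent {n : ℕ} (hn : 2 < n) : 2 < sobolevExponent n := by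
  have hn' : (2 : ℝ) < n := by exact_mod_cast hn
  rw [sobolevExponent, lt_div_iff₀ (by linarith)]
  linarith

theorem sobolevExponent_mul_one_sub_inv {n : ℕ} (hn : 2 < n) :
    sobolevExponent n * (1 - (n : ℝ)⁻¹) = sobolevExponent n / 2 + 1 := by
  have hn' : (2 : ℝ) < n := by exact_mod_cast hn
  have : (n : ℝ) - 2 ≠ 0 := by linarith
  rw [sobolevExponent]
  field_simp
  ring

theorem card_mul_rpow_one_sub_inv_le {ι : Type*} [Fintype ι] [Nonempty ι] {D : ι → ℝ} {F G : ℝ}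
    (hD : ∀ i, 0 < D i) (hF : 0 < F) (hG : 0 < G) (h : (∏ i, D i) * G = F) :
    (Fintype.card ι : ℝ) * (F * G ^ (-(Fintype.card ι : ℝ)⁻¹))
      ≤ F ^ (1 - (Fintype.card ι : ℝ)⁻¹) * ∑ i, D i := by
  set r : ℝ := (Fintype.card ι : ℝ)
  have hr : 0 < r := Nat.cast_pos.2 Fintype.card_pos
  have amgm : (∏ i, D i) ^ r⁻¹ ≤ (∑ i, D i) / r := by
    simpa [r] using Real.geom_mean_le_arith_mean Finset.univ 1 D (fun _ _ ↦ zero_le_one)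
      (by simpa using Fintype.card_pos) fun i _ ↦ (hD i).le
  have hprod : F * G ^ (-r⁻¹) = F ^ (1 - r⁻¹) * (∏ i, D i) ^ r⁻¹ := by
    rw [eq_div_of_mul_eq hG.ne' h, Real.div_rpow hF.le hG.le, Real.rpow_neg hG.le,
      Real.rpow_sub hF, Real.rpow_one]
    field_simp
  calc r * (F * G ^ (-r⁻¹)) = F ^ (1 - r⁻¹) * (r * (∏ i, D i) ^ r⁻¹) := by rw [hprod]; ring
    _ ≤ F ^ (1 - r⁻¹) * ∑ i, D i := by gcongr; rwa [le_div_iff₀' hr] at amgm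

theorem integral_mul_le_sqrt_mul_sqrt {α : Type*} [MeasurableSpace α] {μ : Measure α} {f g : α → ℝ}
    (hf : MemLp f 2 μ) (hg : MemLp g 2 μ) :
    ∫ x, f x * g x ∂μ ≤ √(∫ x, f x ^ 2 ∂μ) * √(∫ x, g x ^ 2 ∂μ) :=
  calc ∫ x, f x * g x ∂μ ≤ ∫ x, ‖f x‖ * ‖g x‖ ∂μ :=
        integral_mono (hf.integrable_mul hg) (hf.norm.integrable_mul hg.norm) fun x ↦
          (le_abs_self _).trans_eq (abs_mul _ _)
    _ ≤ _ := by
        simpa [Real.sqrt_eq_rpow] using integral_mul_norm_le_Lp_mul_Lq (f := f) (g := g) (.two_two)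
          (by simpa using hf) (by simpa using hg)

theorem integral_sum_mul_le_sqrt_mul_sqrt {α ι : Type*} [MeasurableSpace α] {μ : Measure α}
    [Fintype ι] {P Q : α → ι → ℝ} (hP : ∀ i, MemLp (fun x ↦ P x i) 2 μ)
    (hQ : ∀ i, MemLp (fun x ↦ Q x i) 2 μ) :
    ∫ x, ∑ i, P x i * Q x i ∂μ
      ≤ √(∫ x, ∑ i, P x i ^ 2 ∂μ) * √(∫ x, ∑ i, Q x i ^ 2 ∂μ) := by
  have hPQ (i) : Integrable (fun x ↦ P x i * Q x i) μ := (hP i).integrable_mul (hQ i)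
  rw [integral_finsetSum _ fun i _ ↦ hPQ i,
    integral_finsetSum _ fun i _ ↦ (hP i).integrable_sq,
    integral_finsetSum _ fun i _ ↦ (hQ i).integrable_sq]
  exact (Finset.sum_le_sum fun i _ ↦ integral_mul_le_sqrt_mul_sqrt (hP i) (hQ i)).trans
    (Real.sum_sqrt_mul_sqrt_le _ (fun i ↦ integral_nonneg fun x ↦ sq_nonneg _)
      fun i ↦ integral_nonneg fun x ↦ sq_nonneg _)

theorem hasDerivAt_comp_update {ι : Type*} [Finite ι] [DecidableEq ι] {u : (ι → ℝ) → ℝ}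
    {x : ι → ℝ} (hu : DifferentiableAt ℝ u x) (i : ι) :
    HasDerivAt (fun s ↦ u (Function.update x i s)) (fderiv ℝ u x (Pi.single i 1)) (x i) := by
  cases nonempty_fintype ι
  have hx : Function.update x i (x i) = x := Function.update_eq_self i x
  exact HasFDerivAt.comp_hasDerivAt (x i) (by rw [hx]; exact hu.hasFDerivAt)
    (hasDerivAt_update x i (x i))

namespace IsKnotheTransport

theorem card_mul_setIntegral_rpow_le {n : ℕ} [NeZero n] {a b c d : Fin n → ℝ}
    {F G : (Fin n → ℝ) → ℝ} {T D : (Fin n → ℝ) → Fin n → ℝ}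
    (h : IsKnotheTransport a b c d F G T D) (hT : Continuous T) (hD : Continuous D)
    (hF : Continuous F) (hG : Continuous G) (hF₀ : ∀ x, 0 < F x) (hG₀ : ∀ y, 0 < G y) :
    n * ∫ y in Icc c d, G y ^ (1 - (n : ℝ)⁻¹)
      ≤ ∑ i, ∫ x in Icc a b, F x ^ (1 - (n : ℝ)⁻¹) * D x i := by
  have hF' : Continuous fun x ↦ F x ^ (1 - (n : ℝ)⁻¹) := hF.rpow_const fun x ↦ .inl (hF₀ x).ne'
  have hG' : Continuous fun y ↦ G y ^ (-(n : ℝ)⁻¹) := hG.rpow_const fun y ↦ .inl (hG₀ y).ne'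
  have hint {φ : (Fin n → ℝ) → ℝ} (hφ : Continuous φ) : IntegrableOn φ (Icc a b) :=
    hφ.continuousOn.integrableOn_compact isCompact_Icc
  have hsplit (y) : G y ^ (1 - (n : ℝ)⁻¹) = G y * G y ^ (-(n : ℝ)⁻¹) := by
    rw [sub_eq_add_neg, Real.rpow_add (hG₀ y), Real.rpow_one]
  calc n * ∫ y in Icc c d, G y ^ (1 - (n : ℝ)⁻¹)
      = ∫ x in Icc a b, n * (F x * G (T x) ^ (-(n : ℝ)⁻¹)) := by
        simp only [hsplit, integral_const_mul, ← h.integral_comp _ hG']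
    _ ≤ ∫ x in Icc a b, F x ^ (1 - (n : ℝ)⁻¹) * ∑ i, D x i := by
        refine setIntegral_mono_on (hint ?_) (hint ?_) measurableSet_Icc fun x hx ↦ ?_
        · exact continuous_const.mul (hF.mul (hG'.comp hT))
        · fun_prop
        · simpa using card_mul_rpow_one_sub_inv_le (h.diag_pos x hx) (hF₀ x) (hG₀ _)
            (h.prod_diag_mul x hx)
    _ = ∑ i, ∫ x in Icc a b, F x ^ (1 - (n : ℝ)⁻¹) * D x i := by
        simp only [Finset.mul_sum]
        exact integral_finsetSum _ fun i _ ↦ hint (by fun_prop)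

variable {n : ℕ} {a b c d : Fin (n + 1) → ℝ} {F G : (Fin (n + 1) → ℝ) → ℝ}
  {T D : (Fin (n + 1) → ℝ) → Fin (n + 1) → ℝ} {u : (Fin (n + 1) → ℝ) → ℝ} {S M : ℝ}

theorem setIntegral_mul_diag_le (h : IsKnotheTransport a b c d F G T D) (hT : Continuous T)
    (hD : Continuous D) (i : Fin (n + 1)) (hab : a i ≤ b i) (hu : ContDiff ℝ 1 u)
    (hS : ∀ y ∈ Icc c d, |y i| ≤ S) (hM : ∀ x ∈ Icc a b, x i = a i ∨ x i = b i → |u x| ≤ M) :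
    ∫ x in Icc a b, u x * D x i ≤ 2 * (M * S) * volume.real (Icc (i.removeNth a) (i.removeNth b))
      + ∫ x in Icc a b, -fderiv ℝ u x (Pi.single i 1) * T x i := by
  have : Continuous fun x ↦ fderiv ℝ u x (Pi.single i 1) :=
    (hu.continuous_fderiv one_ne_zero).clm_apply continuous_const
  have huc := hu.continuous
  have hint {φ : (Fin (n + 1) → ℝ) → ℝ} (hφ : Continuous φ) : IntegrableOn φ (Icc a b) :=
    hφ.continuousOn.integrableOn_compact isCompact_Icc
  have key := setIntegral_Icc_partialDeriv_le (φ := fun x ↦ u x * T x i)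
    (φ' := fun x ↦ fderiv ℝ u x (Pi.single i 1) * T x i + u x * D x i) (M := M * S) i hab
    (by fun_prop)
    (fun x hx ↦ by
      simpa [Pi.mul_def] using (hasDerivAt_comp_update (hu.differentiable one_ne_zero x) i).mul
        (h.hasDerivAt x hx i))
    fun x hx hxi ↦ by
      rw [abs_mul]
      exact mul_le_mul (hM x hx hxi) (hS _ (h.mapsTo hx)) (abs_nonneg _)
        ((abs_nonneg _).trans (hM x hx hxi))
  rw [integral_add (hint (by fun_prop)) (hint (by fun_prop))] at key
  simp only [neg_mul, integral_neg]
  linarith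

end IsKnotheTransport

theorem fderiv_rpow_half_add_one_apply {E : Type*} [NormedAddCommGroup E] [NormedSpace ℝ E]
    {w : E → ℝ} {x : E} (hw : DifferentiableAt ℝ w x) (hw₀ : 0 < w x) (p : ℝ) (y : E) :
    fderiv ℝ (fun x ↦ w x ^ (p / 2 + 1)) x y
      = (p / 2 + 1) * (fderiv ℝ w x y * √(w x ^ p)) := by
  rw [(hw.hasFDerivAt.rpow_const (p := p / 2 + 1) (.inl hw₀.ne')).fderiv, Real.sqrt_eq_rpow,
    ← Real.rpow_mul hw₀.le]
  simp only [FunLike.coe_smul, Pi.smul_apply, smul_eq_mul]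
  ring_nf

theorem IsKnotheTransport.neg_setIntegral_fderiv_mul_le {n : ℕ} {a b c d : Fin n → ℝ}
    {w G : (Fin n → ℝ) → ℝ} {T D : (Fin n → ℝ) → Fin n → ℝ} {p : ℝ} (hp : 0 ≤ p)
    (h : IsKnotheTransport a b c d (fun x ↦ w x ^ p) G T D) (hT : Continuous T)
    (hw : ContDiff ℝ 1 w) (hw₀ : ∀ x, 0 < w x) :
    ∑ i, ∫ x in Icc a b, -fderiv ℝ (fun x ↦ w x ^ (p / 2 + 1)) x (Pi.single i 1) * T x i
      ≤ (p / 2 + 1) * (√(∫ x in Icc a b, ∑ i, fderiv ℝ w x (Pi.single i 1) ^ 2)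
        * √(∫ y in Icc c d, G y * ∑ i, y i ^ 2)) := by
  have hw' (i) : Continuous fun x ↦ -fderiv ℝ w x (Pi.single i 1) :=
    ((hw.continuous_fderiv one_ne_zero).clm_apply continuous_const).neg
  have hF : Continuous fun x ↦ √(w x ^ p) :=
    (hw.continuous.rpow_const fun x ↦ .inl (hw₀ x).ne').sqrt
  have hTi (i) : Continuous fun x ↦ T x i := (continuous_apply i).comp hT
  have hint {φ : (Fin n → ℝ) → ℝ} (hφ : Continuous φ) : IntegrableOn φ (Icc a b) :=
    hφ.continuousOn.integrableOn_compact isCompact_Icc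
  have hLp {φ : (Fin n → ℝ) → ℝ} (hφ : Continuous φ) : MemLp φ 2 (volume.restrict (Icc a b)) :=
    (memLp_two_iff_integrable_sq hφ.aestronglyMeasurable).2 (hint (hφ.pow 2))
  have cauchySchwarz := integral_sum_mul_le_sqrt_mul_sqrt
    (P := fun x i ↦ -fderiv ℝ w x (Pi.single i 1)) (Q := fun x i ↦ √(w x ^ p) * T x i)
    (fun i ↦ hLp (hw' i)) fun i ↦ hLp (hF.mul (hTi i))
  have hmoment : ∫ x in Icc a b, ∑ i, (√(w x ^ p) * T x i) ^ 2
      = ∫ y in Icc c d, G y * ∑ i, y i ^ 2 := by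
    rw [← h.integral_comp (fun y ↦ ∑ i, y i ^ 2) (by fun_prop)]
    simp only [mul_pow, Real.sq_sqrt (Real.rpow_nonneg (hw₀ _).le p), ← Finset.mul_sum]
  simp only [neg_sq, hmoment] at cauchySchwarz
  refine le_trans (Eq.le ?_) (mul_le_mul_of_nonneg_left cauchySchwarz (by positivity))
  rw [integral_finsetSum _ fun i _ ↦ hint (by fun_prop), Finset.mul_sum]
  refine Finset.sum_congr rfl fun i _ ↦ ?_
  simp only [← integral_const_mul,
    fderiv_rpow_half_add_one_apply (hw.differentiable one_ne_zero _) (hw₀ _)]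
  congr 1 with x
  ring

theorem mul_setIntegral_rpow_one_sub_inv_le {n : ℕ} (hn : 2 < n + 1) {a b c d : Fin (n + 1) → ℝ}
    (hab : ∀ i, a i < b i) (hcd : ∀ i, c i < d i) {w G : (Fin (n + 1) → ℝ) → ℝ}
    (hw : ContDiff ℝ 1 w) (hw₀ : ∀ x, 0 < w x) (hG : Continuous G) (hG₀ : ∀ y, 0 < G y)
    (hmass : ∫ x in Icc a b, w x ^ sobolevExponent (n + 1) = ∫ y in Icc c d, G y) {ε S : ℝ}
    (hε : ∀ x i, x i = a i ∨ x i = b i → w x ≤ ε) (hS : ∀ y ∈ Icc c d, ∀ i, |y i| ≤ S) :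
    (n + 1 : ℕ) * ∫ y in Icc c d, G y ^ (1 - ((n + 1 : ℕ) : ℝ)⁻¹)
      ≤ 2 * (ε ^ (sobolevExponent (n + 1) / 2 + 1) * S)
          * ∑ i : Fin (n + 1), volume.real (Icc (i.removeNth a) (i.removeNth b))
        + (sobolevExponent (n + 1) / 2 + 1)
          * (√(∫ x in Icc a b, ∑ i, fderiv ℝ w x (Pi.single i 1) ^ 2)
            * √(∫ y in Icc c d, G y * ∑ i, y i ^ 2)) := by
  have hp := two_lt_sobolevExponent hn
  set p := sobolevExponent (n + 1)
  have hF : Continuous fun x ↦ w x ^ p := hw.continuous.rpow_const fun x ↦ .inl (hw₀ x).ne'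
  have hF₀ (x) : 0 < w x ^ p := Real.rpow_pos_of_pos (hw₀ x) p
  have hu : ContDiff ℝ 1 fun x ↦ w x ^ (p / 2 + 1) := hw.rpow_const_of_ne fun x ↦ (hw₀ x).ne'
  obtain ⟨T, D, hT, hD, h⟩ := exists_isKnotheTransport (P := Unit) hab hcd
    (F := fun _ x ↦ w x ^ p) (G := fun _ ↦ G) (hF.comp continuous_snd) (hG.comp continuous_snd)
    (fun _ ↦ hF₀) (fun _ ↦ hG₀) fun _ ↦ hmass
  replace hT : Continuous (T ()) := hT.comp (by fun_prop : Continuous fun x ↦ ((), x))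
  replace hD : Continuous (D ()) := hD.comp (by fun_prop : Continuous fun x ↦ ((), x))
  have hdiag := (h ()).card_mul_setIntegral_rpow_le hT hD hF hG hF₀ hG₀
  simp only [← Real.rpow_mul (hw₀ _).le, p, sobolevExponent_mul_one_sub_inv hn] at hdiag
  refine hdiag.trans ((Finset.sum_le_sum fun i _ ↦ (h ()).setIntegral_mul_diag_le hT hD i
    (hab i).le hu (fun y hy ↦ hS y hy i) (M := ε ^ (p / 2 + 1)) fun x _ hxi ↦ ?_).trans ?_)
  · exact (abs_of_pos (Real.rpow_pos_of_pos (hw₀ x) _)).trans_le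
      (Real.rpow_le_rpow (hw₀ x).le (hε x i hxi) (by linarith))
  · rw [Finset.sum_add_distrib, ← Finset.mul_sum]
    gcongr
    exact (h ()).neg_setIntegral_fderiv_mul_le (by linarith) hT hw hw₀

end TransportInequality

/-! ### Compactly supported functions -/

section CompactSupport

theorem contDiff_sqrt_sq_add_sq {E : Type*} [NormedAddCommGroup E] [NormedSpace ℝ E] {v : E → ℝ}
    (hv : ContDiff ℝ 1 v) {ε : ℝ} (hε : 0 < ε) : ContDiff ℝ 1 fun x ↦ √(v x ^ 2 + ε ^ 2) :=
  ((hv.pow 2).add contDiff_const).sqrt fun x ↦ by positivity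

theorem fderiv_sqrt_sq_add_sq_apply_sq_le {E : Type*} [NormedAddCommGroup E] [NormedSpace ℝ E]
    {v : E → ℝ} {x : E} (hv : DifferentiableAt ℝ v x) {ε : ℝ} (hε : 0 < ε) (y : E) :
    fderiv ℝ (fun x ↦ √(v x ^ 2 + ε ^ 2)) x y ^ 2 ≤ fderiv ℝ v x y ^ 2 := by
  have hpos : 0 < v x ^ 2 + ε ^ 2 := by positivity
  have hderiv : fderiv ℝ (fun x ↦ √(v x ^ 2 + ε ^ 2)) x y
      = v x / √(v x ^ 2 + ε ^ 2) * fderiv ℝ v x y := by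
    rw [(((hv.hasFDerivAt.pow 2).add_const (ε ^ 2)).sqrt hpos.ne').fderiv]
    simp only [FunLike.coe_smul, Pi.smul_apply, smul_eq_mul, nsmul_eq_mul]
    field_simp
    norm_num
  rw [hderiv, mul_pow, div_pow, Real.sq_sqrt hpos.le]
  exact mul_le_of_le_one_left (sq_nonneg _) ((div_le_one hpos).2 (by linarith [sq_nonneg ε]))

theorem aecover_Icc_neg_self (ι : Type*) [Fintype ι] :
    AECover (volume : Measure (ι → ℝ)) atTop fun S : ℝ ↦ Icc (fun _ ↦ -S) (fun _ ↦ S) where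
  ae_eventually_mem := .of_forall fun x ↦ by
    filter_upwards [eventually_ge_atTop ‖x‖] with S hS
    have h (i) := abs_le.1 ((norm_le_pi_norm x i).trans hS)
    exact ⟨fun i ↦ (h i).1, fun i ↦ (h i).2⟩
  measurableSet _ := measurableSet_Icc

theorem integrable_sum_sq_fderiv {ι : Type*} [Fintype ι] [DecidableEq ι] {v : (ι → ℝ) → ℝ}
    (hv : ContDiff ℝ 1 v) (hvs : HasCompactSupport v) :
    Integrable fun x ↦ ∑ i, fderiv ℝ v x (Pi.single i 1) ^ 2 := by
  have := hv.continuous_fderiv one_ne_zero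
  refine Continuous.integrable_of_hasCompactSupport (by fun_prop)
    ((hvs.fderiv (𝕜 := ℝ)).mono fun x hx h0 ↦ hx ?_)
  simp [h0]

theorem setIntegral_sum_sq_fderiv_sqrt_sq_add_sq_le {ι : Type*} [Fintype ι] [DecidableEq ι]
    {v : (ι → ℝ) → ℝ} (hv : ContDiff ℝ 1 v) (hvs : HasCompactSupport v) {ε : ℝ} (hε : 0 < ε)
    (s : Set (ι → ℝ)) :
    ∫ x in s, ∑ i, fderiv ℝ (fun x ↦ √(v x ^ 2 + ε ^ 2)) x (Pi.single i 1) ^ 2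
      ≤ ∫ x, ∑ i, fderiv ℝ v x (Pi.single i 1) ^ 2 := by
  have hint := integrable_sum_sq_fderiv hv hvs
  refine (integral_mono_of_nonneg (.of_forall fun x ↦ by positivity) hint.integrableOn
    (.of_forall fun x ↦ Finset.sum_le_sum fun i _ ↦ ?_)).trans
    (setIntegral_le_integral hint (.of_forall fun x ↦ by positivity))
  exact fderiv_sqrt_sq_add_sq_apply_sq_le (hv.differentiable one_ne_zero x) hε _

theorem tendsto_setIntegral_sqrt_sq_add_sq_rpow {ι : Type*} [Fintype ι] {v : (ι → ℝ) → ℝ}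
    (hv : Continuous v) {p : ℝ} (hp : 0 < p) {R : ℝ} (hvR : ∀ x, R ≤ ‖x‖ → v x = 0) :
    Tendsto (fun ε : ℝ ↦ ∫ x in Icc (fun _ ↦ -R) (fun _ ↦ R), √(v x ^ 2 + ε ^ 2) ^ p)
      (nhds 0) (nhds (∫ x, |v x| ^ p)) := by
  have hcont : Continuous fun ε : ℝ ↦
      ∫ x in Icc (fun _ ↦ -R) (fun _ ↦ R), √(v x ^ 2 + ε ^ 2) ^ p :=
    continuous_parametric_integral_of_continuous
      ((by fun_prop : Continuous fun q : ℝ × (ι → ℝ) ↦ √(v q.2 ^ 2 + q.1 ^ 2)).rpow_const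
        fun _ ↦ .inr hp.le) isCompact_Icc
  convert hcont.tendsto 0 using 2
  simp only [zero_pow two_ne_zero, add_zero, Real.sqrt_sq_eq_abs]
  refine (setIntegral_eq_integral_of_forall_compl_eq_zero fun x hx ↦ ?_).symm
  have hRx : R ≤ ‖x‖ := by
    by_contra! h
    have hx' (i) := abs_le.1 ((norm_le_pi_norm x i).trans h.le)
    exact hx ⟨fun i ↦ (hx' i).1, fun i ↦ (hx' i).2⟩
  rw [hvR x hRx, abs_zero, Real.zero_rpow hp.ne']

theorem tendsto_rpow_add_one_mul_inv {r : ℝ} (hr : 0 < r) :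
    Tendsto (fun ε : ℝ ↦ ε ^ (r + 1) * ε⁻¹) (nhdsWithin 0 (Ioi 0)) (nhds 0) := by
  have h0 : Tendsto (fun ε : ℝ ↦ ε ^ r) (nhdsWithin 0 (Ioi 0)) (nhds 0) := by
    simpa [Real.zero_rpow hr.ne'] using
      ((Real.continuous_rpow_const hr.le).tendsto 0).mono_left nhdsWithin_le_nhds
  refine h0.congr' ?_
  filter_upwards [self_mem_nhdsWithin] with ε hε
  rw [Real.rpow_add_one (mem_Ioi.1 hε).ne', mul_inv_cancel_right₀ (mem_Ioi.1 hε).ne']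

variable {n : ℕ} {v g : (Fin (n + 1) → ℝ) → ℝ}

-- `√(v² + ε²)` is a positive `C¹` function equal to `ε` where `v` vanishes, in particular on the
-- boundary of the box; the factor `l` restores the equality of masses.
theorem mul_rpow_mul_setIntegral_le_of_regularization (hn : 2 < n + 1) (hv : ContDiff ℝ 1 v)
    (hvs : HasCompactSupport v) (hg : Continuous g) (hg₀ : ∀ y, 0 < g y) {R S ε l : ℝ}
    (hR : 0 < R) (hS : 0 < S) (hε : 0 < ε) (hvR : ∀ x i, |x i| = R → v x = 0)
    (hl : l = (∫ x in Icc (fun _ ↦ -R) (fun _ ↦ R), √(v x ^ 2 + ε ^ 2) ^ sobolevExponent (n + 1))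
      / ∫ y in Icc (fun _ ↦ -S) (fun _ ↦ S), g y) :
    (n + 1 : ℕ) * (l ^ (1 - ((n + 1 : ℕ) : ℝ)⁻¹)
        * ∫ y in Icc (fun _ ↦ -S) (fun _ ↦ S), g y ^ (1 - ((n + 1 : ℕ) : ℝ)⁻¹))
      ≤ 2 * (ε ^ (sobolevExponent (n + 1) / 2 + 1) * S)
          * ∑ i : Fin (n + 1), volume.real (Icc (i.removeNth fun _ ↦ -R) (i.removeNth fun _ ↦ R))
        + (sobolevExponent (n + 1) / 2 + 1)
          * (√(∫ x, ∑ i, fderiv ℝ v x (Pi.single i 1) ^ 2)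
            * √(l * ∫ y in Icc (fun _ ↦ -S) (fun _ ↦ S), g y * ∑ i, y i ^ 2)) := by
  have hp := two_lt_sobolevExponent hn
  set p := sobolevExponent (n + 1)
  have hw := contDiff_sqrt_sq_add_sq hv hε
  have hw₀ (x) : 0 < √(v x ^ 2 + ε ^ 2) := by positivity
  have hM := setIntegral_Icc_pos (fun _ ↦ neg_lt_self hR)
    (hw.continuous.rpow_const (p := p) fun x ↦ .inl (hw₀ x).ne')
    fun x ↦ Real.rpow_pos_of_pos (hw₀ x) p
  have hΓ := setIntegral_Icc_pos (fun _ ↦ neg_lt_self hS) hg hg₀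
  have hl₀ : 0 < l := hl ▸ div_pos hM hΓ
  have hdir := setIntegral_sum_sq_fderiv_sqrt_sq_add_sq_le hv hvs hε (Icc (fun _ ↦ -R) fun _ ↦ R)
  have key := mul_setIntegral_rpow_one_sub_inv_le hn (fun _ ↦ neg_lt_self hR)
    (fun _ ↦ neg_lt_self hS) hw hw₀ (G := fun y ↦ l * g y) (by fun_prop)
    (fun y ↦ mul_pos hl₀ (hg₀ y))
    (by rw [integral_const_mul, hl, div_mul_cancel₀ _ hΓ.ne'])
    (ε := ε) (S := S)
    (fun x i hx ↦ by
      rw [hvR x i (by rw [abs_eq hR.le]; exact hx.symm), zero_pow two_ne_zero, zero_add,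
        Real.sqrt_sq hε.le])
    fun y hy i ↦ abs_le.2 ⟨hy.1 i, hy.2 i⟩
  simp only [Real.mul_rpow hl₀.le (hg₀ _).le, mul_assoc l, integral_const_mul] at key
  exact key.trans (by gcongr)

theorem mul_integral_rpow_one_sub_inv_le (hn : 2 < n + 1) (hv : ContDiff ℝ 1 v)
    (hvs : HasCompactSupport v) (hg : Continuous g) (hg₀ : ∀ y, 0 < g y) (hgi : Integrable g)
    (hgr : Integrable fun y ↦ g y ^ (1 - ((n + 1 : ℕ) : ℝ)⁻¹))
    (hgm : Integrable fun y ↦ g y * ∑ i, y i ^ 2)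
    (hmass : ∫ x, |v x| ^ sobolevExponent (n + 1) = ∫ y, g y) :
    (n + 1 : ℕ) * ∫ y, g y ^ (1 - ((n + 1 : ℕ) : ℝ)⁻¹)
      ≤ (sobolevExponent (n + 1) / 2 + 1)
        * (√(∫ x, ∑ i, fderiv ℝ v x (Pi.single i 1) ^ 2) * √(∫ y, g y * ∑ i, y i ^ 2)) := by
  have hp := two_lt_sobolevExponent hn
  obtain ⟨R, hR, hvR⟩ := hvs.exists_pos_le_norm
  have hvR' (x : Fin (n + 1) → ℝ) (i) (hx : |x i| = R) : v x = 0 :=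
    hvR x (hx.symm.trans_le (norm_le_pi_norm x i))
  have hΓ : 0 < ∫ y, g y :=
    (integral_pos_iff_support_of_nonneg (fun y ↦ (hg₀ y).le) hgi).2
      (by simp [Function.support_eq_univ fun y ↦ (hg₀ y).ne'])
  have hr : 0 ≤ 1 - ((n + 1 : ℕ) : ℝ)⁻¹ := sub_nonneg.2 (Nat.cast_inv_le_one _)
  -- With target boxes of side `2 / ε` the boundary term `ε ^ (p / 2 + 1) * ε⁻¹` still vanishes,
  -- so a single limit `ε → 0` removes the regularization and exhausts the space.
  have hJ : AECover (volume : Measure (Fin (n + 1) → ℝ)) (nhdsWithin 0 (Ioi 0))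
      fun ε : ℝ ↦ Icc (fun _ ↦ -ε⁻¹) (fun _ ↦ ε⁻¹) :=
    (aecover_Icc_neg_self _).comp_tendsto tendsto_inv_nhdsGT_zero
  have hε : Tendsto (fun ε : ℝ ↦ ε ^ (sobolevExponent (n + 1) / 2 + 1) * ε⁻¹)
      (nhdsWithin 0 (Ioi 0)) (nhds 0) :=
    tendsto_rpow_add_one_mul_inv (by linarith)
  have hl := ((tendsto_setIntegral_sqrt_sq_add_sq_rpow hv.continuous (zero_lt_two.trans hp)
    hvR).mono_left (nhdsWithin_le_nhds (s := Ioi 0))).div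
    (hJ.integral_tendsto_of_countably_generated hgi) hΓ.ne'
  rw [hmass, div_self hΓ.ne'] at hl
  have hleft := ((hl.rpow_const (p := 1 - ((n + 1 : ℕ) : ℝ)⁻¹) (.inr hr)).mul
    (hJ.integral_tendsto_of_countably_generated hgr)).const_mul ((n + 1 : ℕ) : ℝ)
  have hright := ((hε.const_mul 2).mul_const (∑ i : Fin (n + 1),
    volume.real (Icc (i.removeNth fun _ ↦ -R) (i.removeNth fun _ ↦ R)))).add
    ((((hl.mul (hJ.integral_tendsto_of_countably_generated hgm)).sqrt).const_mul
      √(∫ x, ∑ i, fderiv ℝ v x (Pi.single i 1) ^ 2)).const_mul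
      (sobolevExponent (n + 1) / 2 + 1))
  have hlim := le_of_tendsto_of_tendsto hleft hright (by
    filter_upwards [self_mem_nhdsWithin] with ε hε
    exact mul_rpow_mul_setIntegral_le_of_regularization hn hv hvs hg hg₀ hR (inv_pos.2 hε) hε
      hvR' rfl)
  simpa using hlim

theorem sum_sq_fderiv_orthonormalBasis {ι E : Type*} [Fintype ι] [NormedAddCommGroup E]
    [InnerProductSpace ℝ E] [CompleteSpace E] (b : OrthonormalBasis ι ℝ E) (v : E → ℝ) (x : E) :
    ∑ i, fderiv ℝ v x (b i) ^ 2 = ‖gradient v x‖ ^ 2 := by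
  simp only [← b.sum_sq_norm_inner_left, inner_gradient_left, Real.norm_eq_abs, sq_abs]

theorem integral_comp_toLp {ι : Type*} [Fintype ι] (φ : EuclideanSpace ℝ ι → ℝ) :
    ∫ x : ι → ℝ, φ (WithLp.toLp 2 x) = ∫ x, φ x :=
  (PiLp.volume_preserving_toLp ι).integral_comp
    (MeasurableEquiv.toLp 2 (ι → ℝ)).measurableEmbedding φ

theorem integrable_comp_toLp {ι : Type*} [Fintype ι] {φ : EuclideanSpace ℝ ι → ℝ}
    (hφ : Integrable φ) : Integrable fun x : ι → ℝ ↦ φ (WithLp.toLp 2 x) :=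
  (PiLp.volume_preserving_toLp ι).integrable_comp_of_integrable hφ

theorem sum_sq_fderiv_comp_toLp {ι : Type*} [Fintype ι] [DecidableEq ι]
    (v : EuclideanSpace ℝ ι → ℝ) (x : ι → ℝ) :
    ∑ i, fderiv ℝ (fun y : ι → ℝ ↦ v (WithLp.toLp 2 y)) x (Pi.single i 1) ^ 2
      = ‖gradient v (WithLp.toLp 2 x)‖ ^ 2 := by
  rw [← sum_sq_fderiv_orthonormalBasis (EuclideanSpace.basisFun ι ℝ)]
  refine Finset.sum_congr rfl fun i _ ↦ ?_
  have h := (PiLp.continuousLinearEquiv 2 ℝ fun _ : ι ↦ ℝ).symm.comp_right_fderiv (f := v) (x := x)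
  rw [EuclideanSpace.basisFun_apply]
  exact congrArg (· ^ 2) (DFunLike.congr_fun h (Pi.single i 1))

theorem mul_integral_rpow_one_sub_inv_le_norm_gradient {N : ℕ} (hN : 2 < N)
    {v g : EuclideanSpace ℝ (Fin N) → ℝ} (hv : ContDiff ℝ 1 v) (hvs : HasCompactSupport v)
    (hg : Continuous g) (hg₀ : ∀ y, 0 < g y) (hgi : Integrable g)
    (hgr : Integrable fun y ↦ g y ^ (1 - (N : ℝ)⁻¹)) (hgm : Integrable fun y ↦ g y * ‖y‖ ^ 2)
    (hmass : ∫ x, |v x| ^ sobolevExponent N = ∫ y, g y) :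
    N * ∫ y, g y ^ (1 - (N : ℝ)⁻¹)
      ≤ (sobolevExponent N / 2 + 1)
        * (√(∫ x, ‖gradient v x‖ ^ 2) * √(∫ y, g y * ‖y‖ ^ 2)) := by
  obtain ⟨n, rfl⟩ : ∃ n, N = n + 1 := ⟨N - 1, by omega⟩
  let e := (PiLp.continuousLinearEquiv 2 ℝ fun _ : Fin (n + 1) ↦ ℝ).symm
  have hsq (y : Fin (n + 1) → ℝ) : ∑ i, y i ^ 2 = ‖WithLp.toLp 2 y‖ ^ 2 :=
    (EuclideanSpace.real_norm_sq_eq _).symm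
  have key := mul_integral_rpow_one_sub_inv_le hN (v := fun x ↦ v (WithLp.toLp 2 x))
    (g := fun x ↦ g (WithLp.toLp 2 x)) (hv.comp e.contDiff) (hvs.comp_homeomorph e.toHomeomorph)
    (by fun_prop) (fun y ↦ hg₀ _) (integrable_comp_toLp hgi) (integrable_comp_toLp hgr)
    (by simpa only [hsq] using integrable_comp_toLp hgm)
    (by rw [integral_comp_toLp g, ← hmass, ← integral_comp_toLp])
  simp only [sum_sq_fderiv_comp_toLp] at key
  simp only [hsq] at key
  rwa [integral_comp_toLp fun y ↦ g y ^ (1 - ((n + 1 : ℕ) : ℝ)⁻¹),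
    integral_comp_toLp fun x ↦ ‖gradient v x‖ ^ 2,
    integral_comp_toLp fun y ↦ g y * ‖y‖ ^ 2] at key

end CompactSupport

/-! ### Integrals of the ground state -/

section GroundState

section Radial

variable {E : Type*} [NormedAddCommGroup E] [NormedSpace ℝ E] [FiniteDimensional ℝ E]
  [MeasurableSpace E] [BorelSpace E] (μ : Measure E) [μ.IsAddHaarMeasure] {K s : ℝ}

theorem integrable_one_add_norm_sq_div_rpow_neg (hK : 0 < K)
    (hs : (Module.finrank ℝ E : ℝ) < 2 * s) :
    Integrable (fun x : E ↦ (1 + ‖x‖ ^ 2 / K) ^ (-s)) μ := by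
  have h := (integrable_rpow_neg_one_add_norm_sq (μ := μ) hs).comp_smul
    (inv_ne_zero (Real.sqrt_pos.2 hK).ne')
  refine h.congr (.of_forall fun x ↦ ?_)
  have hnorm : ‖(√K)⁻¹ • x‖ ^ 2 = ‖x‖ ^ 2 / K := by
    rw [norm_smul, norm_inv, Real.norm_of_nonneg K.sqrt_nonneg, mul_pow, inv_pow,
      Real.sq_sqrt hK.le, inv_mul_eq_div]
  simp only [hnorm]
  congr 1
  ring

theorem hasDerivAt_pow_succ_mul_one_add_sq_div_rpow_neg (hK : 0 < K) (s : ℝ) (n : ℕ) (r : ℝ) :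
    HasDerivAt (fun r : ℝ ↦ r ^ (n + 1) * (1 + r ^ 2 / K) ^ (-s))
      (2 * s * (r ^ n * (1 + r ^ 2 / K) ^ (-(s + 1)))
        - (2 * s - (n + 1 : ℕ)) * (r ^ n * (1 + r ^ 2 / K) ^ (-s))) r := by
  have hpos : 0 < 1 + r ^ 2 / K := by positivity
  have hbase : HasDerivAt (fun r : ℝ ↦ 1 + r ^ 2 / K) (2 * r / K) r := by
    simpa using ((hasDerivAt_pow 2 r).div_const K).const_add 1
  refine ((hasDerivAt_pow (n + 1) r).mul
    (hbase.rpow_const (p := -s) (.inl hpos.ne'))).congr_deriv ?_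
  have hsplit : (1 + r ^ 2 / K) ^ (-s) = (1 + r ^ 2 / K) * (1 + r ^ 2 / K) ^ (-s - 1) := by
    rw [Real.rpow_sub_one hpos.ne', mul_div_cancel₀ _ hpos.ne']
  rw [hsplit, neg_add', Nat.add_sub_cancel]
  ring

theorem tendsto_pow_mul_one_add_sq_div_rpow_neg (hK : 0 < K) {n : ℕ} (hs : (n : ℝ) < 2 * s) :
    Tendsto (fun r : ℝ ↦ r ^ n * (1 + r ^ 2 / K) ^ (-s)) atTop (nhds 0) := by
  have hs₀ : 0 < s := by linarith [n.cast_nonneg (α := ℝ)]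
  have hlim : Tendsto (fun r : ℝ ↦ K ^ s * r ^ (-(2 * s - n))) atTop (nhds 0) := by
    simpa using (tendsto_rpow_neg_atTop (sub_pos.2 hs)).const_mul (K ^ s)
  refine squeeze_zero' ?_ ?_ hlim
  · filter_upwards [eventually_gt_atTop 0] with r hr
    positivity
  · filter_upwards [eventually_gt_atTop 0] with r hr
    calc r ^ n * (1 + r ^ 2 / K) ^ (-s)
        ≤ r ^ n * (r ^ 2 / K) ^ (-s) := by
          gcongr ?_ * ?_
          exact Real.rpow_le_rpow_of_nonpos (by positivity) (by linarith) (by linarith)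
      _ = K ^ s * r ^ (-(2 * s - n)) := by
          rw [Real.div_rpow (by positivity) hK.le, Real.rpow_neg hK.le, div_inv_eq_mul,
            ← Real.rpow_natCast r 2, ← Real.rpow_mul hr.le, ← Real.rpow_natCast r n,
            mul_comm (r ^ _) (K ^ s), mul_left_comm, ← Real.rpow_add hr]
          congr 2
          push_cast
          ring

theorem mul_integral_Ioi_pow_mul_one_add_sq_div_rpow_neg (hK : 0 < K) {n : ℕ}
    (hs : ((n + 1 : ℕ) : ℝ) < 2 * s)
    (hi : IntegrableOn (fun r : ℝ ↦ r ^ n * (1 + r ^ 2 / K) ^ (-s)) (Ioi 0))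
    (hi' : IntegrableOn (fun r : ℝ ↦ r ^ n * (1 + r ^ 2 / K) ^ (-(s + 1))) (Ioi 0)) :
    (2 * s - (n + 1 : ℕ)) * ∫ r in Ioi (0 : ℝ), r ^ n * (1 + r ^ 2 / K) ^ (-s)
      = 2 * s * ∫ r in Ioi (0 : ℝ), r ^ n * (1 + r ^ 2 / K) ^ (-(s + 1)) := by
  have h := integral_Ioi_of_hasDerivAt_of_tendsto'
    (fun r _ ↦ hasDerivAt_pow_succ_mul_one_add_sq_div_rpow_neg hK s n r)
    ((hi'.const_mul _).sub (hi.const_mul _)) (tendsto_pow_mul_one_add_sq_div_rpow_neg hK hs)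
  rw [integral_sub (hi'.const_mul _) (hi.const_mul _), integral_const_mul, integral_const_mul,
    zero_pow n.succ_ne_zero, zero_mul, sub_zero] at h
  linarith

theorem mul_integral_one_add_norm_sq_div_rpow_neg [Nontrivial E] (hK : 0 < K)
    (hs : (Module.finrank ℝ E : ℝ) < 2 * s) :
    (2 * s - Module.finrank ℝ E) * ∫ x : E, (1 + ‖x‖ ^ 2 / K) ^ (-s) ∂μ
      = 2 * s * ∫ x : E, (1 + ‖x‖ ^ 2 / K) ^ (-(s + 1)) ∂μ := by
  obtain ⟨n, hn⟩ := Nat.exists_eq_succ_of_ne_zero (Module.finrank_pos (R := ℝ) (M := E)).ne'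
  have hi := (integrable_fun_norm_addHaar μ (f := fun r ↦ (1 + r ^ 2 / K) ^ (-s))).1
    (integrable_one_add_norm_sq_div_rpow_neg μ hK hs)
  have hi' := (integrable_fun_norm_addHaar μ (f := fun r ↦ (1 + r ^ 2 / K) ^ (-(s + 1)))).1
    (integrable_one_add_norm_sq_div_rpow_neg μ hK (by linarith))
  rw [integral_fun_norm_addHaar μ fun r ↦ (1 + r ^ 2 / K) ^ (-s),
    integral_fun_norm_addHaar μ fun r ↦ (1 + r ^ 2 / K) ^ (-(s + 1))]
  simp only [hn, Nat.succ_eq_add_one, Nat.add_sub_cancel, smul_eq_mul, nsmul_eq_mul]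
    at hs hi hi' ⊢
  linear_combination ((n + 1 : ℕ) : ℝ) * μ.real (ball 0 1)
    * mul_integral_Ioi_pow_mul_one_add_sq_div_rpow_neg hK hs hi hi'

theorem one_add_div_rpow_neg_add_one_mul (hK : 0 < K) (s : ℝ) {t : ℝ} (ht : 0 ≤ t) :
    (1 + t / K) ^ (-(s + 1)) * t = K * ((1 + t / K) ^ (-s) - (1 + t / K) ^ (-(s + 1))) := by
  have hpos : 0 < 1 + t / K := by positivity
  rw [neg_add', Real.rpow_sub_one hpos.ne']
  field_simp
  ring

theorem integrable_one_add_norm_sq_div_rpow_neg_add_one_mul (hK : 0 < K)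
    (hs : (Module.finrank ℝ E : ℝ) < 2 * s) :
    Integrable (fun x : E ↦ (1 + ‖x‖ ^ 2 / K) ^ (-(s + 1)) * ‖x‖ ^ 2) μ := by
  simp only [one_add_div_rpow_neg_add_one_mul hK s (sq_nonneg _)]
  exact ((integrable_one_add_norm_sq_div_rpow_neg μ hK hs).sub
    (integrable_one_add_norm_sq_div_rpow_neg μ hK (by linarith))).const_mul K

theorem mul_integral_one_add_norm_sq_div_rpow_neg_add_one_mul [Nontrivial E] (hK : 0 < K)
    (hs : (Module.finrank ℝ E : ℝ) < 2 * s) :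
    (2 * s - Module.finrank ℝ E) * ∫ x : E, (1 + ‖x‖ ^ 2 / K) ^ (-(s + 1)) * ‖x‖ ^ 2 ∂μ
      = K * Module.finrank ℝ E * ∫ x : E, (1 + ‖x‖ ^ 2 / K) ^ (-(s + 1)) ∂μ := by
  simp only [one_add_div_rpow_neg_add_one_mul hK s (sq_nonneg _)]
  rw [integral_const_mul, integral_sub (integrable_one_add_norm_sq_div_rpow_neg μ hK hs)
    (integrable_one_add_norm_sq_div_rpow_neg μ hK (by linarith))]
  linear_combination K * mul_integral_one_add_norm_sq_div_rpow_neg μ hK hs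

end Radial

variable {N : ℕ}

theorem natCast_mul_sub_two_pos (hN : 2 < N) : (0 : ℝ) < N * (N - 2) := by
  have h : (2 : ℝ) < N := by exact_mod_cast hN
  exact mul_pos (by linarith) (sub_pos.2 h)

theorem finrank_lt_two_mul_sub_one (hN : 2 < N) :
    (Module.finrank ℝ (EuclideanSpace ℝ (Fin N)) : ℝ) < 2 * ((N : ℝ) - 1) := by
  have h : (2 : ℝ) < N := by exact_mod_cast hN
  rw [finrank_euclideanSpace_fin]
  linarith

theorem W_pos (hN : 2 < N) (x : EuclideanSpace ℝ (Fin N)) : 0 < W N x := by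
  have := natCast_mul_sub_two_pos hN
  unfold W
  positivity

theorem continuous_W (hN : 2 < N) : Continuous (W N) := by
  have := natCast_mul_sub_two_pos hN
  exact Continuous.rpow_const (by fun_prop) fun x ↦ .inl (by positivity)

theorem W_rpow_sobolevExponent (hN : 2 < N) (x : EuclideanSpace ℝ (Fin N)) :
    W N x ^ sobolevExponent N
      = (1 + ‖x‖ ^ 2 / ((N : ℝ) * ((N : ℝ) - 2))) ^ (-(((N : ℝ) - 1) + 1)) := by
  have hN₀ := natCast_mul_sub_two_pos hN
  have := right_ne_zero_of_mul hN₀.ne'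
  rw [W, ← Real.rpow_mul (by positivity), sobolevExponent]
  congr 1
  field_simp
  ring

theorem W_rpow_sobolevExponent_rpow (hN : 2 < N) (x : EuclideanSpace ℝ (Fin N)) :
    (W N x ^ sobolevExponent N) ^ (1 - (N : ℝ)⁻¹)
      = (1 + ‖x‖ ^ 2 / ((N : ℝ) * ((N : ℝ) - 2))) ^ (-((N : ℝ) - 1)) := by
  have hN₀ := natCast_mul_sub_two_pos hN
  have := left_ne_zero_of_mul hN₀.ne'
  rw [W_rpow_sobolevExponent hN, ← Real.rpow_mul (by positivity)]
  congr 1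
  field_simp
  ring

theorem integrable_W_rpow_sobolevExponent (hN : 2 < N) :
    Integrable fun x ↦ W N x ^ sobolevExponent N := by
  simp only [W_rpow_sobolevExponent hN]
  exact integrable_one_add_norm_sq_div_rpow_neg _ (natCast_mul_sub_two_pos hN)
    (by linarith [finrank_lt_two_mul_sub_one hN])

theorem integrable_W_rpow_sobolevExponent_rpow (hN : 2 < N) :
    Integrable fun x ↦ (W N x ^ sobolevExponent N) ^ (1 - (N : ℝ)⁻¹) := by
  simp only [W_rpow_sobolevExponent_rpow hN]
  exact integrable_one_add_norm_sq_div_rpow_neg _ (natCast_mul_sub_two_pos hN)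
    (finrank_lt_two_mul_sub_one hN)

theorem integrable_W_rpow_sobolevExponent_mul_norm_sq (hN : 2 < N) :
    Integrable fun x ↦ W N x ^ sobolevExponent N * ‖x‖ ^ 2 := by
  simp only [W_rpow_sobolevExponent hN]
  exact integrable_one_add_norm_sq_div_rpow_neg_add_one_mul _ (natCast_mul_sub_two_pos hN)
    (finrank_lt_two_mul_sub_one hN)

theorem integral_W_rpow_sobolevExponent_pos (hN : 2 < N) :
    0 < ∫ x, W N x ^ sobolevExponent N :=
  integral_pos_of_integrable_nonneg_nonzero (x := 0)
    ((continuous_W hN).rpow_const fun x ↦ .inl (W_pos hN x).ne')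
    (integrable_W_rpow_sobolevExponent hN) (fun x ↦ Real.rpow_nonneg (W_pos hN x).le _)
    (Real.rpow_pos_of_pos (W_pos hN 0) _).ne'

theorem integral_W_rpow_sobolevExponent_rpow (hN : 2 < N) :
    ∫ x, (W N x ^ sobolevExponent N) ^ (1 - (N : ℝ)⁻¹)
      = (sobolevExponent N / 2 + 1) * ∫ x, W N x ^ sobolevExponent N := by
  have hN₀ := natCast_mul_sub_two_pos hN
  have hN₂ := right_ne_zero_of_mul hN₀.ne'
  have : Nontrivial (Fin N) := Fin.nontrivial_iff_two_le.2 hN.le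
  have h := mul_integral_one_add_norm_sq_div_rpow_neg
    (volume : Measure (EuclideanSpace ℝ (Fin N))) hN₀ (finrank_lt_two_mul_sub_one hN)
  rw [finrank_euclideanSpace_fin] at h
  have hexp : sobolevExponent N / 2 + 1 = 2 * ((N : ℝ) - 1) / (N - 2) := by
    rw [sobolevExponent]
    field_simp
    ring
  simp only [W_rpow_sobolevExponent_rpow hN]
  simp only [W_rpow_sobolevExponent hN]
  rw [hexp, div_mul_eq_mul_div, eq_div_iff hN₂]
  linear_combination h

theorem integral_W_rpow_sobolevExponent_mul_norm_sq (hN : 2 < N) :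
    ∫ x, W N x ^ sobolevExponent N * ‖x‖ ^ 2 = N ^ 2 * ∫ x, W N x ^ sobolevExponent N := by
  have hN₀ := natCast_mul_sub_two_pos hN
  have hN₂ := right_ne_zero_of_mul hN₀.ne'
  have : Nontrivial (Fin N) := Fin.nontrivial_iff_two_le.2 hN.le
  have h := mul_integral_one_add_norm_sq_div_rpow_neg_add_one_mul
    (volume : Measure (EuclideanSpace ℝ (Fin N))) hN₀ (finrank_lt_two_mul_sub_one hN)
  rw [finrank_euclideanSpace_fin] at h
  simp only [W_rpow_sobolevExponent hN]
  refine mul_left_cancel₀ hN₂ ?_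
  linear_combination h

theorem norm_gradient {E : Type*} [NormedAddCommGroup E] [InnerProductSpace ℝ E]
    [CompleteSpace E] (u : E → ℝ) (x : E) : ‖gradient u x‖ = ‖fderiv ℝ u x‖ :=
  (InnerProductSpace.toDual ℝ E).symm.norm_map _

theorem norm_gradient_W_sq (hN : 2 < N) (x : EuclideanSpace ℝ (Fin N)) :
    ‖gradient (W N) x‖ ^ 2 = W N x ^ sobolevExponent N * ‖x‖ ^ 2 / N ^ 2 := by
  have hN₀ := natCast_mul_sub_two_pos hN
  have := left_ne_zero_of_mul hN₀.ne'
  have := right_ne_zero_of_mul hN₀.ne'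
  rw [W_rpow_sobolevExponent hN]
  set K : ℝ := N * (N - 2) with hK
  have hpos : 0 < 1 + ‖x‖ ^ 2 / K := by positivity
  have hbase : HasFDerivAt (fun x : EuclideanSpace ℝ (Fin N) ↦ 1 + ‖x‖ ^ 2 / K)
      (K⁻¹ • 2 • innerSL ℝ x) x := by
    simpa only [div_eq_inv_mul] using
      ((hasStrictFDerivAt_norm_sq x).hasFDerivAt.const_mul K⁻¹).const_add 1
  have hW : HasFDerivAt (W N) _ x := hbase.rpow_const (p := -(((N : ℝ) - 2) / 2)) (.inl hpos.ne')
  have hsq : ((1 + ‖x‖ ^ 2 / K) ^ (-(((N : ℝ) - 2) / 2) - 1)) ^ 2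
      = (1 + ‖x‖ ^ 2 / K) ^ (-(((N : ℝ) - 1) + 1)) := by
    rw [← Real.rpow_mul_natCast hpos.le]
    congr 1
    push_cast
    ring
  rw [norm_gradient, hW.fderiv, ← Nat.cast_smul_eq_nsmul ℝ]
  simp only [norm_smul, innerSL_apply_norm, mul_pow, Real.norm_eq_abs, sq_abs, hsq]
  have hcoeff : (-(((N : ℝ) - 2) / 2)) ^ 2 * (K⁻¹ ^ 2 * ((2 : ℕ) : ℝ) ^ 2) = (N ^ 2 : ℝ)⁻¹ := by
    rw [hK]
    field_simp
    norm_num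
  linear_combination (1 + ‖x‖ ^ 2 / K) ^ (-(((N : ℝ) - 1) + 1)) * ‖x‖ ^ 2 * hcoeff

theorem integral_norm_gradient_W_sq (hN : 2 < N) :
    ∫ x, ‖gradient (W N) x‖ ^ 2 = ∫ x, W N x ^ sobolevExponent N := by
  have hN₁ := left_ne_zero_of_mul (natCast_mul_sub_two_pos hN).ne'
  simp only [norm_gradient_W_sq hN]
  rw [integral_div, integral_W_rpow_sobolevExponent_mul_norm_sq hN,
    mul_div_cancel_left₀ _ (pow_ne_zero 2 hN₁)]

end GroundState

/-! ### Removing compact support by cutoff -/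

section Cutoff

open scoped ENNReal

variable {E : Type*} [NormedAddCommGroup E] [MeasurableSpace E] [BorelSpace E] {μ : Measure E}

theorem exists_eLpNorm_indicator_compl_ball_le [ProperSpace E] {F : Type*}
    [NormedAddCommGroup F] [NormedSpace ℝ F] [μ.Regular] {p : ℝ≥0∞} (hp : p ≠ ∞) {f : E → F}
    (hf : MemLp f p μ) {ε : ℝ≥0∞} (hε : ε ≠ 0) :
    ∃ R > 0, eLpNorm ((ball 0 R)ᶜ.indicator f) p μ ≤ ε := by
  obtain ⟨g, hg, hfg, -⟩ := hf.exists_hasCompactSupport_eLpNorm_sub_le hp hε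
  obtain ⟨R, hR, hgR⟩ := hg.exists_pos_le_norm
  have hind : (ball 0 R)ᶜ.indicator f = (ball 0 R)ᶜ.indicator (f - g) :=
    indicator_congr fun x hx ↦ by
      rw [Pi.sub_apply, hgR x (by simpa using hx), sub_zero]
  exact ⟨R, hR, hind ▸ (eLpNorm_indicator_le _).trans hfg⟩

theorem eLpNorm_le_eLpNorm_mul_add_eLpNorm_indicator {p : ℝ≥0∞} (hp : 1 ≤ p) {χ v : E → ℝ}
    (hχ : Continuous χ) (hχ₀₁ : ∀ x, χ x ∈ Icc 0 1) {R : ℝ} (hχ₁ : ∀ x ∈ ball 0 R, χ x = 1)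
    (hv : Continuous v) :
    eLpNorm v p μ ≤ eLpNorm (χ * v) p μ + eLpNorm ((ball 0 R)ᶜ.indicator v) p μ := by
  have hsplit : v = χ * v + (1 - χ) * v := by ring
  have hrest : eLpNorm ((1 - χ) * v) p μ ≤ eLpNorm ((ball 0 R)ᶜ.indicator v) p μ := by
    refine eLpNorm_mono fun x ↦ ?_
    by_cases hx : x ∈ ball 0 R
    · rw [Pi.mul_apply, Pi.sub_apply, Pi.one_apply, hχ₁ x hx, sub_self, zero_mul, norm_zero]
      exact norm_nonneg _
    · rw [indicator_of_mem hx, Pi.mul_apply, norm_mul, Pi.sub_apply, Pi.one_apply,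
        Real.norm_of_nonneg (sub_nonneg.2 (hχ₀₁ x).2)]
      exact mul_le_of_le_one_left (norm_nonneg _) (sub_le_self _ (hχ₀₁ x).1)
  calc eLpNorm v p μ = eLpNorm (χ * v + (1 - χ) * v) p μ := by rw [← hsplit]
    _ ≤ eLpNorm (χ * v) p μ + eLpNorm ((1 - χ) * v) p μ :=
      eLpNorm_add_le (hχ.mul hv).aestronglyMeasurable
        ((continuous_const.sub hχ).mul hv).aestronglyMeasurable hp
    _ ≤ _ := by gcongr

variable [NormedSpace ℝ E] [FiniteDimensional ℝ E]

theorem eLpNorm_fderiv_mul_le {p r q : ℝ≥0∞} [ENNReal.HolderTriple p r q] (hq : 1 ≤ q)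
    {χ v : E → ℝ} (hχ : ContDiff ℝ 1 χ) (hχ₀₁ : ∀ x, χ x ∈ Icc 0 1) {R : ℝ}
    (hχ₁ : ∀ x ∈ ball 0 R, χ x = 1) (hv : ContDiff ℝ 1 v) :
    eLpNorm (fderiv ℝ (χ * v)) q μ ≤ eLpNorm (fderiv ℝ v) q μ
      + eLpNorm ((ball 0 R)ᶜ.indicator v) p μ * eLpNorm (fderiv ℝ χ) r μ := by
  have hleibniz : fderiv ℝ (χ * v) = χ • fderiv ℝ v + (ball 0 R)ᶜ.indicator v • fderiv ℝ χ := by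
    ext1 x
    rw [fderiv_mul (hχ.differentiable one_ne_zero x) (hv.differentiable one_ne_zero x)]
    by_cases hx : x ∈ ball 0 R
    · have hlocal : χ =ᶠ[nhds x] fun _ ↦ 1 := by
        filter_upwards [isOpen_ball.mem_nhds hx] with y hy using hχ₁ y hy
      simp only [Pi.add_apply, Pi.smul_apply', hlocal.fderiv_eq, fderiv_const_apply, smul_zero]
    · rw [Pi.add_apply, Pi.smul_apply', Pi.smul_apply', indicator_of_mem hx]
  have hχ' : AEStronglyMeasurable (fderiv ℝ χ) μ :=
    (hχ.continuous_fderiv one_ne_zero).aestronglyMeasurable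
  have hv' : AEStronglyMeasurable (fderiv ℝ v) μ :=
    (hv.continuous_fderiv one_ne_zero).aestronglyMeasurable
  have hind : AEStronglyMeasurable ((ball 0 R)ᶜ.indicator v) μ :=
    hv.continuous.aestronglyMeasurable.indicator measurableSet_ball.compl
  rw [hleibniz]
  refine (eLpNorm_add_le (hχ.continuous.aestronglyMeasurable.smul hv') (hind.smul hχ') hq).trans
    (add_le_add (eLpNorm_mono fun x ↦ ?_) (eLpNorm_smul_le_mul_eLpNorm hχ' hind))
  rw [Pi.smul_apply', norm_smul, Real.norm_of_nonneg (hχ₀₁ x).1]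
  exact mul_le_of_le_one_left (norm_nonneg _) (hχ₀₁ x).2

variable (μ) [μ.IsAddHaarMeasure] [Nontrivial E]

theorem eLpNorm_finrank_inv_smul_comp_inv_smul {F : Type*} [NormedAddCommGroup F]
    [NormedSpace ℝ F] (f : E → F) {R : ℝ} (hR : 0 < R) :
    eLpNorm (fun x ↦ R⁻¹ • f (R⁻¹ • x)) (Module.finrank ℝ E) μ
      = eLpNorm f (Module.finrank ℝ E) μ := by
  have hemb : MeasurableEmbedding fun x : E ↦ R⁻¹ • x :=
    measurableEmbedding_const_smul₀ (inv_ne_zero hR.ne')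
  have hscale := hemb.eLpNorm_map_measure (μ := μ) (g := f) (p := Module.finrank ℝ E)
  rw [Measure.map_addHaar_smul μ (inv_ne_zero hR.ne'),
    eLpNorm_smul_measure_of_ne_top (ENNReal.natCast_ne_top _)] at hscale
  have hcoeff : ENNReal.ofReal |((R⁻¹) ^ Module.finrank ℝ E)⁻¹|
      ^ (1 / (Module.finrank ℝ E : ℝ≥0∞)).toReal = ENNReal.ofReal R := by
    rw [inv_pow, inv_inv, abs_of_pos (by positivity), one_div,
      ENNReal.toReal_inv, ENNReal.toReal_natCast, ENNReal.ofReal_rpow_of_pos (by positivity),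
      Real.pow_rpow_inv_natCast hR.le Module.finrank_pos.ne']
  rw [hcoeff] at hscale
  change eLpNorm (R⁻¹ • (f ∘ fun x ↦ R⁻¹ • x)) _ μ = _
  rw [eLpNorm_const_smul, ← hscale, smul_eq_mul, ← mul_assoc, Real.enorm_eq_ofReal (by positivity),
    ← ENNReal.ofReal_mul (by positivity), inv_mul_cancel₀ hR.ne', ENNReal.ofReal_one, one_mul]

-- The `Lᵈ` norm of the gradient is dilation invariant in dimension `d`, so one bound works
-- for every `R`.
theorem exists_cutoff :
    ∃ D : ℝ≥0∞, D ≠ ∞ ∧ ∀ R > 0, ∃ χ : E → ℝ, ContDiff ℝ 1 χ ∧ HasCompactSupport χ ∧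
      (∀ x, χ x ∈ Icc 0 1) ∧ (∀ x ∈ ball 0 R, χ x = 1) ∧
      eLpNorm (fderiv ℝ χ) (Module.finrank ℝ E) μ = D := by
  let φ : ContDiffBump (0 : E) := ⟨1, 2, one_pos, one_lt_two⟩
  have hφ : ContDiff ℝ 1 φ := φ.contDiff
  have hφ' : MemLp (fderiv ℝ φ) (Module.finrank ℝ E) μ :=
    (hφ.continuous_fderiv one_ne_zero).memLp_of_hasCompactSupport (φ.hasCompactSupport.fderiv ℝ)
  refine ⟨_, hφ'.eLpNorm_ne_top, fun R hR ↦ ⟨fun x ↦ φ (R⁻¹ • x), by fun_prop,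
    φ.hasCompactSupport.comp_homeomorph (Homeomorph.smulOfNeZero _ (inv_ne_zero hR.ne')),
    fun x ↦ ⟨φ.nonneg, φ.le_one⟩, fun x hx ↦ φ.one_of_mem_closedBall ?_, ?_⟩⟩
  · rw [mem_ball_zero_iff] at hx
    rw [mem_closedBall_zero_iff, norm_smul, norm_inv, Real.norm_of_nonneg hR.le,
      inv_mul_le_one₀ hR]
    exact hx.le
  · rw [← eLpNorm_finrank_inv_smul_comp_inv_smul μ (fderiv ℝ φ) hR]
    congr 1
    ext1 x
    exact fderiv_comp_smul _

variable {μ}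

theorem eLpNorm_le_mul_eLpNorm_fderiv_of_hasCompactSupport {p q C : ℝ≥0∞}
    [ENNReal.HolderTriple p (Module.finrank ℝ E) q] (hq : 1 ≤ q) (hp : p ≠ ∞) (hC : C ≠ ∞)
    (hsob : ∀ u : E → ℝ, ContDiff ℝ 1 u → HasCompactSupport u →
      eLpNorm u p μ ≤ C * eLpNorm (fderiv ℝ u) q μ)
    {v : E → ℝ} (hv : ContDiff ℝ 1 v) (hvp : MemLp v p μ) :
    eLpNorm v p μ ≤ C * eLpNorm (fderiv ℝ v) q μ := by
  have hp₁ : 1 ≤ p := hq.trans (ENNReal.HolderTriple.le p (Module.finrank ℝ E) q)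
  obtain ⟨D, hD, hcut⟩ := exists_cutoff μ
  have hCD : C * D + 1 ≠ ∞ := by finiteness
  refine ENNReal.le_of_forall_pos_le_add fun ε hε _ ↦ ?_
  obtain ⟨R, hR, htail⟩ := exists_eLpNorm_indicator_compl_ball_le hp hvp
    (ENNReal.div_ne_zero.2 ⟨ENNReal.coe_ne_zero.2 hε.ne', hCD⟩)
  obtain ⟨χ, hχ, hχs, hχ₀₁, hχ₁, rfl⟩ := hcut R hR
  set T := eLpNorm ((ball 0 R)ᶜ.indicator v) p μ
  set D := eLpNorm (fderiv ℝ χ) (Module.finrank ℝ E) μ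
  calc eLpNorm v p μ ≤ eLpNorm (χ * v) p μ + T :=
        eLpNorm_le_eLpNorm_mul_add_eLpNorm_indicator hp₁ hχ.continuous hχ₀₁ hχ₁ hv.continuous
    _ ≤ C * (eLpNorm (fderiv ℝ v) q μ + T * D) + T := by
        gcongr
        exact (hsob _ (hχ.mul hv) hχs.mul_right).trans
          (by gcongr; exact eLpNorm_fderiv_mul_le hq hχ hχ₀₁ hχ₁ hv)
    _ = C * eLpNorm (fderiv ℝ v) q μ + T * (C * D + 1) := by ring
    _ ≤ C * eLpNorm (fderiv ℝ v) q μ + ε := by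
        gcongr
        exact (ENNReal.le_div_iff_mul_le (.inl (by simp)) (.inl hCD)).1 htail

end Cutoff

/-! ### The sharp Sobolev inequality -/

section SharpSobolev

open scoped ENNReal

variable {N : ℕ}

theorem inv_sobolevExponent_add_inv (hN : 2 < N) :
    (sobolevExponent N)⁻¹ + (N : ℝ)⁻¹ = 2⁻¹ := by
  have hN₀ := natCast_mul_sub_two_pos hN
  have := left_ne_zero_of_mul hN₀.ne'
  have := right_ne_zero_of_mul hN₀.ne'
  rw [sobolevExponent]
  field_simp
  ring

theorem holderTriple_sobolevExponent (hN : 2 < N) :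
    ENNReal.HolderTriple (ENNReal.ofReal (sobolevExponent N)) N 2 := by
  have hp : 0 < sobolevExponent N := two_pos.trans (two_lt_sobolevExponent hN)
  have hN₀ : (0 : ℝ) < N := by exact_mod_cast (two_pos.trans hN)
  refine ⟨?_⟩
  rw [← ENNReal.ofReal_natCast N, ← ENNReal.ofReal_inv_of_pos hp, ← ENNReal.ofReal_inv_of_pos hN₀,
    ← ENNReal.ofReal_add (by positivity) (by positivity), inv_sobolevExponent_add_inv hN,
    ENNReal.ofReal_inv_of_pos two_pos, ENNReal.ofReal_ofNat]

variable {v : EuclideanSpace ℝ (Fin N) → ℝ}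

theorem integral_rpow_mul_le_sqrt_mul_sqrt_of_hasCompactSupport (hN : 2 < N)
    (hv : ContDiff ℝ 1 v) (hvs : HasCompactSupport v)
    (hM : 0 < ∫ x, |v x| ^ sobolevExponent N) :
    ((∫ x, |v x| ^ sobolevExponent N) / ∫ x, W N x ^ sobolevExponent N) ^ (1 - (N : ℝ)⁻¹)
        * ∫ x, W N x ^ sobolevExponent N
      ≤ √(∫ x, ‖gradient v x‖ ^ 2) * √(∫ x, |v x| ^ sobolevExponent N) := by
  set M := ∫ x, |v x| ^ sobolevExponent N with hMdef
  have hB := integral_W_rpow_sobolevExponent_pos hN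
  set B := ∫ x, W N x ^ sobolevExponent N with hBdef
  have hN₀ : (0 : ℝ) < N := by exact_mod_cast (two_pos.trans hN)
  have hp := two_pos.trans (two_lt_sobolevExponent hN)
  have hscale : 0 < M / B := div_pos hM hB
  have hmul (x : EuclideanSpace ℝ (Fin N)) :
      (M / B * W N x ^ sobolevExponent N) ^ (1 - (N : ℝ)⁻¹)
        = (M / B) ^ (1 - (N : ℝ)⁻¹) * (W N x ^ sobolevExponent N) ^ (1 - (N : ℝ)⁻¹) :=
    Real.mul_rpow hscale.le (Real.rpow_nonneg (W_pos hN x).le _)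
  have key := mul_integral_rpow_one_sub_inv_le_norm_gradient hN hv hvs
    (g := fun x ↦ M / B * W N x ^ sobolevExponent N)
    (continuous_const.mul ((continuous_W hN).rpow_const fun x ↦ .inl (W_pos hN x).ne'))
    (fun x ↦ mul_pos hscale (Real.rpow_pos_of_pos (W_pos hN x) _))
    ((integrable_W_rpow_sobolevExponent hN).const_mul _)
    (by simpa only [hmul] using (integrable_W_rpow_sobolevExponent_rpow hN).const_mul _)
    (by simpa only [mul_assoc] using (integrable_W_rpow_sobolevExponent_mul_norm_sq hN).const_mul _)
    (by rw [integral_const_mul, ← hMdef, ← hBdef, div_mul_cancel₀ _ hB.ne'])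
  have hmoment : √(∫ x, M / B * W N x ^ sobolevExponent N * ‖x‖ ^ 2) = N * √M := by
    simp only [mul_assoc]
    rw [integral_const_mul, integral_W_rpow_sobolevExponent_mul_norm_sq hN, ← hBdef,
      mul_left_comm, div_mul_cancel₀ _ hB.ne', Real.sqrt_mul (by positivity),
      Real.sqrt_sq hN₀.le]
  simp only [hmul] at key
  rw [integral_const_mul, integral_W_rpow_sobolevExponent_rpow hN, hmoment, ← hBdef] at key
  refine le_of_mul_le_mul_left (a := N * (sobolevExponent N / 2 + 1)) ?_ (by positivity)
  linarith

theorem integral_rpow_inv_le_of_hasCompactSupport (hN : 2 < N) (hv : ContDiff ℝ 1 v)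
    (hvs : HasCompactSupport v) :
    (∫ x, |v x| ^ sobolevExponent N) ^ (sobolevExponent N)⁻¹
      ≤ (∫ x, W N x ^ sobolevExponent N) ^ (-(N : ℝ)⁻¹) * √(∫ x, ‖gradient v x‖ ^ 2) := by
  have hp := two_pos.trans (two_lt_sobolevExponent hN)
  have hB := integral_W_rpow_sobolevExponent_pos hN
  have hM₀ : 0 ≤ ∫ x, |v x| ^ sobolevExponent N := integral_nonneg fun x ↦ by positivity
  rcases hM₀.eq_or_lt with hM | hM
  · rw [← hM, Real.zero_rpow (inv_ne_zero hp.ne')]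
    positivity
  have key := integral_rpow_mul_le_sqrt_mul_sqrt_of_hasCompactSupport hN hv hvs hM
  set M := ∫ x, |v x| ^ sobolevExponent N
  set B := ∫ x, W N x ^ sobolevExponent N
  have hpow : (M / B) ^ (1 - (N : ℝ)⁻¹) * B
      = B ^ (N : ℝ)⁻¹ * M ^ (sobolevExponent N)⁻¹ * √M := by
    have hexp : 1 - (N : ℝ)⁻¹ = (sobolevExponent N)⁻¹ + 1 / 2 := by
      linarith [inv_sobolevExponent_add_inv hN]
    rw [Real.div_rpow hM₀ hB.le, Real.rpow_sub hB, Real.rpow_one, hexp, Real.rpow_add hM,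
      ← Real.sqrt_eq_rpow]
    field_simp
  rw [hpow] at key
  rw [Real.rpow_neg hB.le, inv_mul_eq_div, le_div_iff₀' (Real.rpow_pos_of_pos hB _)]
  exact le_of_mul_le_mul_right key (Real.sqrt_pos.2 hM)

theorem eLpNorm_ofReal_eq_ofReal_integral_rpow {α F : Type*} [MeasurableSpace α]
    [NormedAddCommGroup F] {μ : Measure α} {f : α → F} {p : ℝ} (hp : 0 < p)
    (hf : MemLp f (ENNReal.ofReal p) μ) :
    eLpNorm f (ENNReal.ofReal p) μ = ENNReal.ofReal ((∫ x, ‖f x‖ ^ p ∂μ) ^ p⁻¹) := by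
  rw [hf.eLpNorm_eq_integral_rpow_norm (ENNReal.ofReal_pos.2 hp).ne' ENNReal.ofReal_ne_top,
    ENNReal.toReal_ofReal hp.le]

theorem eLpNorm_two_eq_ofReal_sqrt_integral_sq {α F : Type*} [MeasurableSpace α]
    [NormedAddCommGroup F] {μ : Measure α} {f : α → F} (hf : MemLp f 2 μ) :
    eLpNorm f 2 μ = ENNReal.ofReal √(∫ x, ‖f x‖ ^ 2 ∂μ) := by
  have h := hf.eLpNorm_eq_integral_rpow_norm two_ne_zero ENNReal.ofNat_ne_top
  simp only [ENNReal.toReal_ofNat, Real.rpow_ofNat] at h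
  rw [h, Real.sqrt_eq_rpow, one_div]

theorem integral_rpow_inv_le (hN : 2 < N) (hv : ContDiff ℝ 1 v)
    (hgrad : Integrable fun x ↦ ‖gradient v x‖ ^ 2)
    (hLp : Integrable fun x ↦ |v x| ^ sobolevExponent N) :
    (∫ x, |v x| ^ sobolevExponent N) ^ (sobolevExponent N)⁻¹
      ≤ (∫ x, W N x ^ sobolevExponent N) ^ (-(N : ℝ)⁻¹) * √(∫ x, ‖gradient v x‖ ^ 2) := by
  have hp := two_pos.trans (two_lt_sobolevExponent hN)
  have hB := integral_W_rpow_sobolevExponent_pos hN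
  have : Nontrivial (Fin N) := Fin.nontrivial_iff_two_le.2 hN.le
  have : ENNReal.HolderTriple (ENNReal.ofReal (sobolevExponent N))
      (Module.finrank ℝ (EuclideanSpace ℝ (Fin N))) 2 := by
    rw [finrank_euclideanSpace_fin]
    exact holderTriple_sobolevExponent hN
  have hv' : MemLp v (ENNReal.ofReal (sobolevExponent N)) := by
    rw [← integrable_norm_rpow_iff hv.continuous.aestronglyMeasurable
      (ENNReal.ofReal_pos.2 hp).ne' ENNReal.ofReal_ne_top, ENNReal.toReal_ofReal hp.le]
    exact hLp
  have hdv : MemLp (fderiv ℝ v) 2 := by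
    rw [memLp_two_iff_integrable_sq_norm
      (hv.continuous_fderiv one_ne_zero).aestronglyMeasurable]
    simpa only [norm_gradient] using hgrad
  have hsob (u : EuclideanSpace ℝ (Fin N) → ℝ) (hu : ContDiff ℝ 1 u) (hus : HasCompactSupport u) :
      eLpNorm u (ENNReal.ofReal (sobolevExponent N)) volume
        ≤ ENNReal.ofReal ((∫ x, W N x ^ sobolevExponent N) ^ (-(N : ℝ)⁻¹))
          * eLpNorm (fderiv ℝ u) 2 volume := by
    rw [eLpNorm_ofReal_eq_ofReal_integral_rpow hp
      (hu.continuous.memLp_of_hasCompactSupport hus), eLpNorm_two_eq_ofReal_sqrt_integral_sq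
      ((hu.continuous_fderiv one_ne_zero).memLp_of_hasCompactSupport (hus.fderiv ℝ)),
      ← ENNReal.ofReal_mul (by positivity)]
    simpa only [norm_gradient, Real.norm_eq_abs] using
      ENNReal.ofReal_le_ofReal (integral_rpow_inv_le_of_hasCompactSupport hN hu hus)
  have key := eLpNorm_le_mul_eLpNorm_fderiv_of_hasCompactSupport (by norm_num)
    ENNReal.ofReal_ne_top ENNReal.ofReal_ne_top hsob hv hv'
  rw [eLpNorm_ofReal_eq_ofReal_integral_rpow hp hv', eLpNorm_two_eq_ofReal_sqrt_integral_sq hdv,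
    ← ENNReal.ofReal_mul (by positivity), ENNReal.ofReal_le_ofReal_iff (by positivity)] at key
  simpa only [norm_gradient, Real.norm_eq_abs] using key

end SharpSobolev

/-! ### The energy identity -/

section Energy

variable {N : ℕ} {v : EuclideanSpace ℝ (Fin N) → ℝ}

theorem integral_rpow_le_integral_norm_gradient_sq (hN : 2 < N) (hv : ContDiff ℝ 1 v)
    (hgrad : Integrable fun x ↦ ‖gradient v x‖ ^ 2)
    (hLp : Integrable fun x ↦ |v x| ^ sobolevExponent N)
    (hle : ∫ x, ‖gradient v x‖ ^ 2 ≤ ∫ x, ‖gradient (W N) x‖ ^ 2) :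
    ∫ x, |v x| ^ sobolevExponent N ≤ ∫ x, ‖gradient v x‖ ^ 2 := by
  have hp := two_lt_sobolevExponent hN
  have hp₀ := two_pos.trans hp
  have hB := integral_W_rpow_sobolevExponent_pos hN
  have key := integral_rpow_inv_le hN hv hgrad hLp
  have hA₀ : 0 ≤ ∫ x, ‖gradient v x‖ ^ 2 := integral_nonneg fun x ↦ by positivity
  have hM₀ : 0 ≤ ∫ x, |v x| ^ sobolevExponent N := integral_nonneg fun x ↦ by positivity
  rw [integral_norm_gradient_W_sq hN] at hle
  set A := ∫ x, ‖gradient v x‖ ^ 2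
  set M := ∫ x, |v x| ^ sobolevExponent N
  set B := ∫ x, W N x ^ sobolevExponent N
  rw [← Real.rpow_le_rpow_iff hM₀ hA₀ (inv_pos.2 hp₀)]
  rcases hA₀.eq_or_lt with hA | hA
  · simpa only [← hA, Real.sqrt_zero, mul_zero, Real.zero_rpow (inv_ne_zero hp₀.ne')] using key
  calc M ^ (sobolevExponent N)⁻¹ ≤ B ^ (-(N : ℝ)⁻¹) * √A := key
    _ ≤ A ^ (-(N : ℝ)⁻¹) * √A := by
        gcongr ?_ * _
        exact Real.rpow_le_rpow_of_nonpos hA hle (by simp)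
    _ = A ^ (sobolevExponent N)⁻¹ := by
        rw [Real.sqrt_eq_rpow, ← Real.rpow_add hA]
        congr 1
        linarith [inv_sobolevExponent_add_inv hN]

theorem natCast_mul_energy_zero (hN : N ≠ 0) (v : EuclideanSpace ℝ (Fin N) → ℝ) :
    N * energy N v 0 = (∫ x, ‖gradient v x‖ ^ 2) + (N - 2) / 2
      * ((∫ x, ‖gradient v x‖ ^ 2) - ∫ x, |v x| ^ sobolevExponent N) := by
  have hN' : (N : ℝ) ≠ 0 := Nat.cast_ne_zero.2 hN
  simp only [energy, Pi.zero_apply, zero_pow two_ne_zero, integral_zero, sobolevExponent]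
  generalize ∫ x, |v x| ^ (2 * (N : ℝ) / ((N : ℝ) - 2)) = M
  field_simp
  ring

end Energy

theorem stmt0_general (N : ℕ) (hN : 2 < N) (v : EuclideanSpace ℝ (Fin N) → ℝ)
    (hv : ContDiff ℝ 1 v)
    (hgrad : Integrable (fun x => ‖gradient v x‖ ^ 2))
    (hLp : Integrable (fun x => |v x| ^ (2 * (N : ℝ) / ((N : ℝ) - 2))))
    (h1 : (∫ x, ‖gradient v x‖ ^ 2) ≤ ∫ x, ‖gradient (W N) x‖ ^ 2) :
    (∫ x, ‖gradient v x‖ ^ 2) ≤ (N : ℝ) * energy N v 0 := by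
  have hN' : (2 : ℝ) < N := by exact_mod_cast hN
  have hsob := integral_rpow_le_integral_norm_gradient_sq hN hv hgrad hLp h1
  rw [natCast_mul_energy_zero (by omega), le_add_iff_nonneg_right]
  exact mul_nonneg (by linarith) (sub_nonneg.2 hsob)

/-- Claim 2.2, first part: variational estimate below the ground state.  If
`‖∇v‖² ≤ ‖∇W‖²` and `E(v,0) ≤ E(W,0)` then `‖∇v‖² ≤ N E(v,0)`. -/
theorem stmt0 (N : ℕ) (hN : N = 3 ∨ N = 4 ∨ N = 5)
    (v : EuclideanSpace ℝ (Fin N) → ℝ)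
    (hv : ContDiff ℝ 1 v)
    (hgrad : Integrable (fun x => ‖gradient v x‖ ^ 2))
    (hLp : Integrable (fun x => |v x| ^ (2 * (N : ℝ) / ((N : ℝ) - 2))))
    (h1 : (∫ x, ‖gradient v x‖ ^ 2) ≤ ∫ x, ‖gradient (W N) x‖ ^ 2)
    (h2 : energy N v 0 ≤ energy N (W N) 0) :
    (∫ x, ‖gradient v x‖ ^ 2) ≤ (N : ℝ) * energy N v 0 :=
  stmt0_general N (by omega) v hv hgrad hLp h1

end
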